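/- arXiv:2011.03887 — 3 statements merged into one kernel-verified Lean document; each statement's English description precedes it below -/
import Mathlib

section
/- Let λ be a nonzero integer, let f(X) = X²(X−λ) ∈ ℤ[X], and let R = ℤ[X]/(f). Then the Dirichlet series Z(s) = Σ_{k≥1} a_R(k) k^{−s} converges for Re(s) > 1, and there exist δ > 0 and a function g holomorphic on {s ∈ ℂ : Re(s) > 1 − δ} with g(1) ≠ 0 such that Z(s) = g(s)·(s−1)^{−3} for all s with Re(s) > 1; that is, Z has a pole of order 3 at s = 1. -/
/-- `idealCount R k` is the number of ideals `I` of `R` such that `R ⧸ I` is finite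
with exactly `k` elements. -/
noncomputable def idealCount (R : Type) [CommRing R] (k : ℕ) : ℕ :=
  Set.ncard {I : Ideal R | Nat.card (R ⧸ I) = k}

/-!
For an ideal `I` of finite index in `ℤ[X]`, let `N(I)` be its index, `I(0)` its ideal of constant
coefficients and `b(I)` the index of `I(0)`. Multiplication by `X` gives `N(I) = b(I) N(I : X)`.
Conversely, given `J` and a nonzero ideal `(a) ⊆ J(0)`, the ideals `I` with `(I : X) = J` and
`I(0) = (a)` are the `(q) + X J` with `q ∈ J` and `q(0) = a`, and they form a torsor under
`(J : X) / J`, which has `b(J)` elements by the same index formula. Hence the series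
`D_h(s, w) = ∑_{h ∈ I} N(I)^(-s) b(I)^(-w)` satisfies

  `D_{X h}(s, w) = ζ(s + w) D_h(s, s + w - 1)`.

The ideals containing `X - λ` are the preimages of the `(n)` under evaluation at `λ`, with `N = n`
and `b = gcd(λ, n)`, so two applications of the recursion give
`Z(s) = ζ(s) ζ(2 s - 1) ∑ n^(-s) gcd(λ, n)^(2 - 2 s)`. The last sum is `ζ(s)` times a Dirichlet
polynomial supported on the divisors of `λ`, whose value at `s = 1` is `1`.
-/

section

open Polynomial

/-! ### Indices of ideals -/

lemma natCard_eq_relIndex {G α : Type*} [AddGroup G] {H K : AddSubgroup G} {φ : K → α}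
    (hφ : Function.Surjective φ) (hker : ∀ x y : K, φ x = φ y ↔ -(x : G) + y ∈ H) :
    Nat.card α = H.relIndex K := by
  have hrel : Setoid.ker φ = QuotientAddGroup.leftRel (H.addSubgroupOf K) := by
    ext x y
    rw [Setoid.ker_def, hker, QuotientAddGroup.leftRel_apply]
    rfl
  rw [← Nat.card_congr (Setoid.quotientKerEquivOfSurjective φ hφ), hrel]
  rfl

lemma cardQuot_comap_of_surjective {A B : Type*} [CommRing A] [CommRing B] {f : A →+* B}
    (hf : Function.Surjective f) (J : Ideal B) : (J.comap f).cardQuot = J.cardQuot :=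
  AddSubgroup.index_comap_of_surjective (f := f.toAddMonoidHom) J.toAddSubgroup hf

/-- The ideals of finite index containing `h`, that is, those coming from finite quotients of
`A ⧸ (h)`; `Submodule.cardQuot` is `0` for an ideal of infinite index. -/
def finiteIndexIdeals {A : Type*} [CommRing A] (h : A) : Set (Ideal A) :=
  {I | h ∈ I ∧ I.cardQuot ≠ 0}

/-! ### Ideals of `R[X]` and the colon ideal by `X` -/

section

variable {R : Type*} [CommRing R]

lemma mem_colon_X {I : Ideal R[X]} {p : R[X]} : p ∈ I.colon {X} ↔ X * p ∈ I := by
  rw [Submodule.mem_colon_singleton, smul_eq_mul, mul_comm]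

lemma le_colon_X (I : Ideal R[X]) : I ≤ I.colon {X} :=
  fun _ hp ↦ mem_colon_X.2 (I.mul_mem_left X hp)

/-- The index in `R` of the ideal of constant coefficients of `I`. Like `Submodule.cardQuot`, it is
`0` when that index is infinite. -/
noncomputable def constNorm (I : Ideal R[X]) : ℕ := (I.map constantCoeff).cardQuot

theorem cardQuot_eq_constNorm_mul (I : Ideal R[X]) :
    I.cardQuot = constNorm I * (I.colon {X}).cardQuot := by
  have hX : (AddMonoidHom.mulLeft (X : R[X])).range = (Ideal.span {X}).toAddSubgroup := by
    ext p
    exact (Ideal.mem_span_singleton.trans (exists_congr fun _ ↦ eq_comm)).symm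
  have hcolon : (I.colon {X}).cardQuot
      = I.toAddSubgroup.relIndex (I ⊔ Ideal.span {X}).toAddSubgroup := by
    rw [Submodule.sup_toAddSubgroup, AddSubgroup.relIndex_sup_left, ← hX,
      ← AddSubgroup.index_comap]
    exact congrArg AddSubgroup.index (AddSubgroup.ext fun p ↦ mem_colon_X)
  have hconst : constNorm I = (I ⊔ Ideal.span {X}).toAddSubgroup.index := by
    rw [← ker_constantCoeff,
      ← Ideal.comap_map_of_surjective' (constantCoeff (R := R)) constantCoeff_surjective]
    exact (cardQuot_comap_of_surjective constantCoeff_surjective _).symm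
  rw [hcolon, hconst, mul_comm]
  exact (AddSubgroup.relIndex_mul_index (Submodule.toAddSubgroup_mono le_sup_left)).symm

lemma constNorm_ne_zero {I : Ideal R[X]} (hI : I.cardQuot ≠ 0) : constNorm I ≠ 0 :=
  left_ne_zero_of_mul ((cardQuot_eq_constNorm_mul I).symm.trans_ne hI)

theorem constNorm_eq_relIndex_colon_X {J : Ideal R[X]} (hJ : J.cardQuot ≠ 0) :
    constNorm J = J.toAddSubgroup.relIndex (J.colon {X}).toAddSubgroup := by
  have hmul := cardQuot_eq_constNorm_mul J
  have hcolon : (J.colon {X}).cardQuot ≠ 0 := right_ne_zero_of_mul (hmul.symm.trans_ne hJ)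
  have hrel := AddSubgroup.relIndex_mul_index (Submodule.toAddSubgroup_mono (le_colon_X J))
  exact mul_right_cancel₀ hcolon (hmul.symm.trans hrel.symm)

/-- The ideal `(q) + X J`: when `q ∈ J` has nonzero constant coefficient, this is the ideal whose
colon by `X` is `J` and which contains `q` and has the constant coefficients of `(q)`. -/
noncomputable def extendIdeal (J : Ideal R[X]) (q : R[X]) : Ideal R[X] :=
  Ideal.span {q} ⊔ Ideal.span {X} * J

lemma self_mem_extendIdeal (J : Ideal R[X]) (q : R[X]) : q ∈ extendIdeal J q :=
  Ideal.mem_sup_left (Ideal.mem_span_singleton_self q)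

lemma X_mul_mem_extendIdeal {J : Ideal R[X]} {p : R[X]} (hp : p ∈ J) (q : R[X]) :
    X * p ∈ extendIdeal J q :=
  Ideal.mem_sup_right (Ideal.mul_mem_mul (Ideal.mem_span_singleton_self X) hp)

lemma map_constantCoeff_extendIdeal (J : Ideal R[X]) (q : R[X]) :
    (extendIdeal J q).map constantCoeff = Ideal.span {constantCoeff q} := by
  simp [extendIdeal, Ideal.map_sup, Ideal.map_mul, Ideal.map_span]

lemma extendIdeal_colon_X {I : Ideal R[X]} {q : R[X]} (hq : q ∈ I)
    (hI : I.map constantCoeff = Ideal.span {constantCoeff q}) :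
    extendIdeal (I.colon {X}) q = I := by
  refine le_antisymm (sup_le ((Ideal.span_singleton_le_iff_mem I).2 hq) ?_) fun p hp ↦ ?_
  · intro y hy
    obtain ⟨p, hp, rfl⟩ := Ideal.mem_span_singleton_mul.1 hy
    exact mem_colon_X.1 hp
  · obtain ⟨r, hr⟩ := Ideal.mem_span_singleton'.1 (hI ▸ Ideal.mem_map_of_mem constantCoeff hp)
    obtain ⟨t, ht⟩ : X ∣ p - C r * q := X_dvd_iff.2 (by simpa [sub_eq_zero] using hr.symm)
    have htI : X * t ∈ I := ht ▸ I.sub_mem hp (I.mul_mem_left _ hq)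
    rw [← sub_add_cancel p (C r * q), ht]
    exact add_mem (X_mul_mem_extendIdeal (mem_colon_X.2 htI) q)
      (Ideal.mul_mem_left _ _ (self_mem_extendIdeal _ q))

variable [IsDomain R]

lemma colon_X_extendIdeal {J : Ideal R[X]} {q : R[X]} (hq : q ∈ J) (hq₀ : constantCoeff q ≠ 0) :
    (extendIdeal J q).colon {X} = J := by
  refine le_antisymm (fun p hp ↦ ?_) fun p hp ↦ mem_colon_X.2 (X_mul_mem_extendIdeal hp q)
  obtain ⟨r, y, hy, hrp⟩ := Ideal.mem_span_singleton_sup.1 (mem_colon_X.1 hp)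
  obtain ⟨j, hj, rfl⟩ := Ideal.mem_span_singleton_mul.1 hy
  have hr : constantCoeff r = 0 := by
    simpa [(constantCoeff_apply q ▸ hq₀ : q.coeff 0 ≠ 0)] using congrArg constantCoeff hrp
  obtain ⟨t, rfl⟩ := X_dvd_iff.2 hr
  have hp : p = t * q + j := mul_left_cancel₀ X_ne_zero (by linear_combination -hrp)
  exact hp ▸ J.add_mem (J.mul_mem_left t hq) hj

lemma extendIdeal_eq_extendIdeal_iff {J : Ideal R[X]} {q q' t : R[X]} (hq : q ∈ J)
    (hq₀ : constantCoeff q ≠ 0) (hqq' : q' = q + X * t) :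
    extendIdeal J q = extendIdeal J q' ↔ t ∈ J := by
  have hcolon := colon_X_extendIdeal hq hq₀
  constructor <;> intro h
  · have hX : X * t ∈ extendIdeal J q := by
      rw [← add_sub_cancel_left q (X * t), ← hqq']
      exact sub_mem (h ▸ self_mem_extendIdeal J q') (self_mem_extendIdeal J q)
    exact hcolon ▸ mem_colon_X.2 hX
  · have hq' : q' ∈ extendIdeal J q :=
      hqq' ▸ add_mem (self_mem_extendIdeal J q) (X_mul_mem_extendIdeal h q)
    have hmap := map_constantCoeff_extendIdeal J q
    rw [← extendIdeal_colon_X hq' (by simp [hmap, hqq']), hcolon]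

theorem ncard_ideals_colon_X_eq {J : Ideal R[X]} (hJ : J.cardQuot ≠ 0) {a : R} (ha₀ : a ≠ 0)
    (ha : a ∈ J.map constantCoeff) :
    {I : Ideal R[X] | I.colon {X} = J ∧ I.map constantCoeff = Ideal.span {a}}.ncard
      = constNorm J := by
  obtain ⟨q, hqJ, rfl⟩ := (Ideal.mem_map_iff_of_surjective _ constantCoeff_surjective).1 ha
  have hmem (t : (J.colon {X}).toAddSubgroup) : q + X * (t : R[X]) ∈ J :=
    J.add_mem hqJ (mem_colon_X.1 t.2)
  have hcoeff (t : R[X]) : constantCoeff (q + X * t) = constantCoeff q := by simp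
  let φ (t : (J.colon {X}).toAddSubgroup) :
      {I : Ideal R[X] | I.colon {X} = J ∧ I.map constantCoeff = Ideal.span {constantCoeff q}} :=
    ⟨extendIdeal J (q + X * (t : R[X])), colon_X_extendIdeal (hmem t) (by rwa [hcoeff]),
      by rw [map_constantCoeff_extendIdeal, hcoeff]⟩
  have hφ : Function.Surjective φ := by
    rintro ⟨I, rfl, hI⟩
    obtain ⟨q', hq', hq'₀⟩ := (Ideal.mem_map_iff_of_surjective _ constantCoeff_surjective).1
      (hI ▸ Ideal.mem_span_singleton_self (constantCoeff q))
    obtain ⟨t, ht⟩ : X ∣ q' - q := X_dvd_iff.2 (by simp [← constantCoeff_apply, hq'₀])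
    have htJ : t ∈ (I.colon {X}).colon {X} :=
      mem_colon_X.2 (ht ▸ sub_mem (le_colon_X I hq') hqJ)
    refine ⟨⟨t, htJ⟩, Subtype.ext ?_⟩
    change extendIdeal _ (q + X * t) = I
    rw [← ht, add_sub_cancel]
    exact extendIdeal_colon_X hq' (hq'₀ ▸ hI)
  rw [constNorm_eq_relIndex_colon_X hJ, ← Nat.card_coe_set_eq]
  refine natCard_eq_relIndex hφ fun x y ↦ Subtype.ext_iff.trans ?_
  exact extendIdeal_eq_extendIdeal_iff (hmem x) (by rwa [hcoeff]) (by ring)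

end

lemma map_constantCoeff_eq_span (I : Ideal ℤ[X]) :
    I.map constantCoeff = Ideal.span {(constNorm I : ℤ)} :=
  (Int.ideal_span_absNorm_eq_self (I.map constantCoeff)).symm

lemma constNorm_eq_iff {I : Ideal ℤ[X]} {n : ℕ} :
    constNorm I = n ↔ I.map constantCoeff = Ideal.span {(n : ℤ)} := by
  rw [map_constantCoeff_eq_span, Ideal.span_singleton_eq_span_singleton, Int.associated_iff_natAbs,
    Int.natAbs_natCast, Int.natAbs_natCast]

/-- For `p = (J, k)`, the ideals `I` with `(I : X) = J` whose constant coefficients have index `k`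
in those of `J`. -/
def extensionIdeals (h : ℤ[X]) (p : finiteIndexIdeals h × ℕ+) : Set (Ideal ℤ[X]) :=
  {I | I.colon {X} = p.1 ∧ constNorm I = constNorm p.1.1 * p.2}

section

variable {h : ℤ[X]}

theorem ncard_extensionIdeals (p : finiteIndexIdeals h × ℕ+) :
    (extensionIdeals h p).ncard = constNorm p.1.1 := by
  obtain ⟨⟨J, -, hJ⟩, k⟩ := p
  simp only [extensionIdeals, constNorm_eq_iff]
  refine ncard_ideals_colon_X_eq hJ ?_ ?_
  · exact_mod_cast mul_ne_zero (constNorm_ne_zero hJ) k.ne_zero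
  · rw [map_constantCoeff_eq_span, Nat.cast_mul]
    exact Ideal.mul_mem_right _ _ (Ideal.mem_span_singleton_self _)

lemma pairwise_disjoint_extensionIdeals :
    Pairwise (Function.onFun Disjoint (extensionIdeals h)) := by
  refine fun p p' hne ↦ Set.disjoint_left.2 fun I hI hI' ↦ hne ?_
  have hJ : p.1 = p'.1 := Subtype.ext (hI.1.symm.trans hI'.1)
  have hk := hI.2.symm.trans hI'.2
  rw [← hJ] at hk
  exact Prod.ext hJ (PNat.eq (mul_left_cancel₀ (constNorm_ne_zero p.1.2.2) hk))

theorem finiteIndexIdeals_X_mul :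
    finiteIndexIdeals (X * h) = ⋃ p, extensionIdeals h p := by
  ext I
  rw [Set.mem_iUnion]
  constructor
  · rintro ⟨hI, hfin⟩
    have hfin' := cardQuot_eq_constNorm_mul I ▸ hfin
    obtain ⟨k, hk⟩ : constNorm (I.colon {X}) ∣ constNorm I := by
      have hle := Ideal.map_mono (f := constantCoeff) (le_colon_X I)
      rwa [map_constantCoeff_eq_span, map_constantCoeff_eq_span,
        Ideal.span_singleton_le_span_singleton, Int.natCast_dvd_natCast] at hle
    have hk₀ : k ≠ 0 := right_ne_zero_of_mul (hk ▸ left_ne_zero_of_mul hfin')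
    exact ⟨⟨⟨I.colon {X}, mem_colon_X.2 hI, right_ne_zero_of_mul hfin'⟩, ⟨k, hk₀.bot_lt⟩⟩, rfl, hk⟩
  · rintro ⟨⟨⟨J, hh, hJ⟩, k⟩, rfl, hk⟩
    refine ⟨mem_colon_X.1 hh, ?_⟩
    rw [cardQuot_eq_constNorm_mul, hk]
    exact mul_ne_zero (mul_ne_zero (constNorm_ne_zero hJ) k.ne_zero) hJ

end

/-! ### Adjoining a factor `X` -/

section

open Complex

lemma hasSum_iUnion_of_ncard {α β : Type*} {T : β → Set α}
    (hT : Pairwise (Function.onFun Disjoint T)) (hfin : ∀ b, (T b).Finite) {f : α → ℂ} {c : β → ℂ}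
    (hf : ∀ b, ∀ x ∈ T b, f x = c b) {a : ℂ}
    (h : HasSum (fun b ↦ (T b).ncard • c b) a) : HasSum (fun x : ⋃ b, T b ↦ f x) a := by
  have (b : β) : Fintype (T b) := (hfin b).fintype
  have hconst {F : Type _} [NormedAddCommGroup F] (b : β) (x : F) :
      HasSum (fun _ : T b ↦ x) ((T b).ncard • x) := by
    rw [← Nat.card_coe_set_eq, Nat.card_eq_fintype_card, ← Finset.card_univ, ← Finset.sum_const]
    exact hasSum_fintype fun _ : T b ↦ x
  rw [← (Set.unionEqSigmaOfDisjoint hT).symm.hasSum_iff]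
  have hval (b : β) : (fun x : T b ↦ f ((Set.unionEqSigmaOfDisjoint hT).symm ⟨b, x⟩ : ⋃ b, T b))
      = fun _ ↦ c b := funext fun x ↦ hf b x x.2
  refine HasSum.sigma_of_hasSum h (fun b ↦ ?_) (.of_norm ?_)
  · exact hval b ▸ hconst b (c b)
  · rw [summable_sigma_of_nonneg fun _ ↦ norm_nonneg _]
    refine ⟨fun b ↦ (hasSum_fintype _).summable, h.summable.norm.congr fun b ↦ ?_⟩
    have hnorm := congrArg (fun g : T b → ℂ ↦ ∑' x, ‖g x‖) (hval b)
    exact (RCLike.norm_nsmul ℝ _ _).trans ((hconst b ‖c b‖).tsum_eq.symm.trans hnorm.symm)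

/-- The term of the two-variable ideal zeta function `∑ N(I)^(-s) b(I)^(-w)`, where `N(I)` is the
index of `I` and `b(I)` that of its ideal of constant coefficients. -/
noncomputable def idealWeight {R : Type*} [CommRing R] (s w : ℂ) (I : Ideal R[X]) : ℂ :=
  (I.cardQuot : ℂ) ^ (-s) * (constNorm I : ℂ) ^ (-w)

lemma idealWeight_zero_right {R : Type*} [CommRing R] (s : ℂ) (I : Ideal R[X]) :
    idealWeight s 0 I = (I.cardQuot : ℂ) ^ (-s) := by
  rw [idealWeight, neg_zero, cpow_zero, mul_one]

lemma hasSum_pnat_cpow_neg {s : ℂ} (hs : 1 < s.re) :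
    HasSum (fun n : ℕ+ ↦ (n : ℂ) ^ (-s)) (riemannZeta s) := by
  have hterm (n : ℕ+) : LSeries.term 1 s n = (n : ℂ) ^ (-s) := by
    rw [LSeries.term_of_ne_zero n.ne_zero, Pi.one_apply, cpow_neg, one_div]
  have hsum : HasSum (LSeries.term 1 s) (riemannZeta s) := LSeriesHasSum_one hs
  refine ((PNat.coe_injective.hasSum_iff fun n hn ↦ ?_).2 hsum).congr_fun fun n ↦ (hterm n).symm
  obtain rfl : n = 0 := by_contra fun hn₀ ↦ hn ⟨⟨n, Nat.pos_of_ne_zero hn₀⟩, rfl⟩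
  exact LSeries.term_zero 1 s

lemma idealWeight_of_mem_extensionIdeals {h : ℤ[X]} {p : finiteIndexIdeals h × ℕ+}
    {I : Ideal ℤ[X]} (hI : I ∈ extensionIdeals h p) (s w : ℂ) :
    constNorm p.1.1 * idealWeight s w I
      = idealWeight s (s + w - 1) p.1.1 * (p.2 : ℂ) ^ (-(s + w)) := by
  obtain ⟨⟨J, _, hJ⟩, k⟩ := p
  obtain ⟨rfl, hk⟩ := hI
  dsimp only at hk ⊢
  have hb : (constNorm (I.colon {X}) : ℂ) ≠ 0 := by exact_mod_cast constNorm_ne_zero hJ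
  have hk₀ : (k : ℂ) ≠ 0 := by exact_mod_cast k.ne_zero
  have hpow : (constNorm (I.colon {X}) : ℂ) ^ (-(s + w - 1)) = constNorm (I.colon {X}) *
      ((constNorm (I.colon {X}) : ℂ) ^ (-s) * (constNorm (I.colon {X}) : ℂ) ^ (-w)) := by
    rw [show -(s + w - 1) = 1 + (-s + -w) by ring, cpow_add _ _ hb, cpow_add _ _ hb, cpow_one]
  rw [idealWeight, idealWeight, cardQuot_eq_constNorm_mul I, hk, hpow, neg_add s w,
    cpow_add _ _ hk₀]
  rw [Nat.cast_mul (_ * _), natCast_mul_natCast_cpow, Nat.cast_mul, natCast_mul_natCast_cpow,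
    natCast_mul_natCast_cpow]
  ring

theorem hasSum_idealWeight_X_mul {h : ℤ[X]} {s w D : ℂ} (hsw : 1 < (s + w).re)
    (hD : HasSum (fun J : finiteIndexIdeals h ↦ idealWeight s (s + w - 1) J.1) D) :
    HasSum (fun I : finiteIndexIdeals (X * h) ↦ idealWeight s w I.1) (riemannZeta (s + w) * D) := by
  have hζ := hasSum_pnat_cpow_neg hsw
  have hsum : Summable fun p : finiteIndexIdeals h × ℕ+ ↦
      idealWeight s (s + w - 1) p.1.1 * (p.2 : ℂ) ^ (-(s + w)) :=
    summable_mul_of_summable_norm (f := fun J : finiteIndexIdeals h ↦ idealWeight s (s + w - 1) J.1)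
      (g := fun k : ℕ+ ↦ (k : ℂ) ^ (-(s + w))) hD.summable.norm hζ.summable.norm
  have hprod := hD.mul hζ hsum
  have hb (p : finiteIndexIdeals h × ℕ+) : (constNorm p.1.1 : ℂ) ≠ 0 :=
    Nat.cast_ne_zero.2 (constNorm_ne_zero p.1.2.2)
  rw [finiteIndexIdeals_X_mul, mul_comm]
  refine hasSum_iUnion_of_ncard (f := idealWeight s w) (c := fun p ↦ (constNorm p.1.1 : ℂ)⁻¹ *
      (idealWeight s (s + w - 1) p.1.1 * (p.2 : ℂ) ^ (-(s + w)))) pairwise_disjoint_extensionIdeals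
    (fun p ↦ Set.finite_of_ncard_ne_zero ?_) (fun p I hI ↦ ?_) ?_
  · exact ncard_extensionIdeals p ▸ constNorm_ne_zero p.1.2.2
  · rw [← idealWeight_of_mem_extensionIdeals hI, inv_mul_cancel_left₀ (hb p)]
  · simpa only [ncard_extensionIdeals, nsmul_eq_mul, mul_inv_cancel_left₀ (hb _)] using hprod

end

/-! ### Sums over greatest common divisors -/

section

open Complex

/-- The Jordan totient `J_z(n) = ∑_{d ∣ n} μ(d) (n / d)^z` with complex exponent, the Möbius
inverse of `n ↦ n^z`. -/
noncomputable def jordanTotient (z : ℂ) (n : ℕ) : ℂ :=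
  ∑ d ∈ n.divisorsAntidiagonal, (ArithmeticFunction.moebius d.1 : ℂ) * (d.2 : ℂ) ^ z

lemma sum_divisors_jordanTotient (z : ℂ) {n : ℕ} (hn : n ≠ 0) :
    ∑ d ∈ n.divisors, jordanTotient z d = (n : ℂ) ^ z :=
  (ArithmeticFunction.sum_eq_iff_sum_mul_moebius_eq (f := jordanTotient z)
    (g := fun m ↦ (m : ℂ) ^ z)).2 (fun _ _ ↦ rfl) n hn.bot_lt

lemma jordanTotient_zero_left {n : ℕ} (hn : n ≠ 0) :
    jordanTotient 0 n = if n = 1 then 1 else 0 := by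
  refine (ArithmeticFunction.sum_eq_iff_sum_mul_moebius_eq
    (f := fun m ↦ if m = 1 then (1 : ℂ) else 0) (g := fun m ↦ (m : ℂ) ^ (0 : ℂ))).1
    (fun m hm ↦ ?_) n hn.bot_lt
  simp [hm.ne']

lemma differentiable_jordanTotient (n : ℕ) : Differentiable ℂ fun z ↦ jordanTotient z n :=
  Differentiable.fun_sum fun _ hd ↦ (differentiable_const _).mul <| differentiable_id.const_cpow <|
    .inl (Nat.cast_ne_zero.2 (Nat.ne_zero_of_mem_divisorsAntidiagonal hd).2)

/-- The Dirichlet polynomial `∑_{d ∣ a} J_z(d) d^(-s)`, the ratio of `∑ gcd(a, n)^z n^(-s)`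
to `ζ(s)`. -/
noncomputable def gcdFactor (a : ℕ) (s z : ℂ) : ℂ :=
  ∑ d ∈ a.divisors, jordanTotient z d * (d : ℂ) ^ (-s)

lemma gcdFactor_zero_right {a : ℕ} (ha : a ≠ 0) (s : ℂ) : gcdFactor a s 0 = 1 := by
  rw [gcdFactor, Finset.sum_eq_single_of_mem 1 (Nat.one_mem_divisors.2 ha) fun d hd hd₁ ↦ ?_]
  · rw [jordanTotient_zero_left one_ne_zero, if_pos rfl, Nat.cast_one, one_cpow, mul_one]
  · rw [jordanTotient_zero_left (Nat.pos_of_mem_divisors hd).ne', if_neg hd₁, zero_mul]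

lemma differentiable_gcdFactor (a : ℕ) {u v : ℂ → ℂ} (hu : Differentiable ℂ u)
    (hv : Differentiable ℂ v) : Differentiable ℂ fun s ↦ gcdFactor a (u s) (v s) :=
  Differentiable.fun_sum fun d hd ↦ ((differentiable_jordanTotient d).comp hv).mul <|
    hu.neg.const_cpow (.inl (Nat.cast_ne_zero.2 (Nat.pos_of_mem_divisors hd).ne'))

lemma hasSum_dvd_cpow_neg {d : ℕ} (hd : d ≠ 0) {s : ℂ} (hs : 1 < s.re) :
    HasSum (fun n : ℕ+ ↦ if d ∣ n then (n : ℂ) ^ (-s) else 0) ((d : ℂ) ^ (-s) * riemannZeta s) := by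
  let e : ℕ+ := ⟨d, hd.bot_lt⟩
  refine ((mul_right_injective e).hasSum_iff fun n hn ↦ if_neg fun hdn ↦ hn ?_).1 ?_
  · obtain ⟨m, hm⟩ := (PNat.dvd_iff (k := e)).2 hdn
    exact ⟨m, hm.symm⟩
  · refine ((hasSum_pnat_cpow_neg hs).mul_left ((d : ℂ) ^ (-s))).congr_fun fun n ↦ ?_
    have hcoe : ((e * n : ℕ+) : ℕ) = d * n := rfl
    rw [Function.comp_apply, hcoe, if_pos (dvd_mul_right d n), Nat.cast_mul,
      natCast_mul_natCast_cpow]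

theorem hasSum_gcd_cpow_mul {a : ℕ} (ha : a ≠ 0) {s : ℂ} (hs : 1 < s.re) (z : ℂ) :
    HasSum (fun n : ℕ+ ↦ (n : ℂ) ^ (-s) * (a.gcd n : ℂ) ^ z)
      (gcdFactor a s z * riemannZeta s) := by
  have hdivisors (n : ℕ+) : (n : ℂ) ^ (-s) * (a.gcd n : ℂ) ^ z
      = ∑ d ∈ a.divisors, jordanTotient z d * if d ∣ n then (n : ℂ) ^ (-s) else 0 := by
    rw [← sum_divisors_jordanTotient z (Nat.gcd_ne_zero_left ha),
      ← Nat.divisors_filter_dvd_of_dvd ha (Nat.gcd_dvd_left a n), Finset.sum_filter, Finset.mul_sum]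
    refine Finset.sum_congr rfl fun d hd ↦ ?_
    simp [Nat.dvd_gcd_iff, Nat.dvd_of_mem_divisors hd, mul_comm]
  simp_rw [hdivisors, gcdFactor, Finset.sum_mul, mul_assoc]
  exact hasSum_sum fun d hd ↦
    (hasSum_dvd_cpow_neg (Nat.pos_of_mem_divisors hd).ne' hs).mul_left _

lemma exists_differentiable_eq_sub_one_mul_riemannZeta :
    ∃ ξ : ℂ → ℂ, Differentiable ℂ ξ ∧ ξ 1 = 1 ∧ ∀ s ≠ 1, ξ s = (s - 1) * riemannZeta s := by
  refine ⟨_, DirichletCharacter.differentiable_LFunctionTrivChar₁ 1, by simp, fun s hs ↦ ?_⟩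
  rw [DirichletCharacter.LFunctionTrivChar₁, Function.update_of_ne hs,
    DirichletCharacter.LFunctionTrivChar, DirichletCharacter.LFunction_modOne_eq]

end

/-! ### Ideals containing a monic linear polynomial -/

section

variable (a : ℤ) (c : ℕ)

/-- The polynomials `p` with `c ∣ p(a)`; for `c ≠ 0` this is the ideal of index `c`
containing `X - a`. -/
noncomputable def linearIdeal : Ideal ℤ[X] := (Ideal.span {(c : ℤ)}).comap (evalRingHom a)

lemma cardQuot_linearIdeal : (linearIdeal a c).cardQuot = c := by
  rw [linearIdeal, cardQuot_comap_of_surjective (eval_surjective a), ← Ideal.absNorm_apply,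
    Ideal.absNorm_span_natCast, Module.finrank_self, pow_one]

lemma linearIdeal_eq_sup : linearIdeal a c = Ideal.span {C (c : ℤ)} ⊔ Ideal.span {X - C a} := by
  rw [← ker_evalRingHom, ← Ideal.comap_map_of_surjective' _ (eval_surjective a),
    Ideal.map_span, Set.image_singleton, coe_evalRingHom, eval_C, linearIdeal]

lemma constNorm_linearIdeal : constNorm (linearIdeal a c) = a.natAbs.gcd c := by
  rw [constNorm_eq_iff, linearIdeal_eq_sup, Ideal.map_sup, Ideal.map_span, Ideal.map_span]
  simp only [Set.image_singleton, constantCoeff_apply, coeff_C_zero, coeff_sub, coeff_X_zero,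
    zero_sub, Ideal.span_singleton_neg]
  rw [sup_comm, ← Ideal.span_insert, ← span_gcd]
  rfl

lemma exists_eq_linearIdeal {I : Ideal ℤ[X]} (hI : X - C a ∈ I) : ∃ n, I = linearIdeal a n := by
  refine ⟨(I.map (evalRingHom a)).cardQuot, ?_⟩
  have hspan := Int.ideal_span_absNorm_eq_self (I.map (evalRingHom a))
  rw [Ideal.absNorm_apply] at hspan
  rw [linearIdeal, hspan, Ideal.comap_map_of_surjective' _ (eval_surjective a),
    ker_evalRingHom, sup_eq_left.2 ((Ideal.span_singleton_le_iff_mem I).2 hI)]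

lemma linearIdeal_injective : Function.Injective (linearIdeal a) :=
  Function.LeftInverse.injective (cardQuot_linearIdeal a)

theorem finiteIndexIdeals_X_sub_C :
    finiteIndexIdeals (X - C a) = Set.range fun n : ℕ+ ↦ linearIdeal a n := by
  ext I
  constructor
  · rintro ⟨hI, hfin⟩
    obtain ⟨n, rfl⟩ := exists_eq_linearIdeal a hI
    rw [cardQuot_linearIdeal] at hfin
    exact ⟨⟨n, hfin.bot_lt⟩, rfl⟩
  · rintro ⟨n, rfl⟩
    exact ⟨by simp [linearIdeal], by simp [cardQuot_linearIdeal]⟩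

theorem hasSum_idealWeight_X_sub_C {a : ℤ} (ha : a ≠ 0) {s : ℂ} (hs : 1 < s.re) (w : ℂ) :
    HasSum (fun I : finiteIndexIdeals (X - C a) ↦ idealWeight s w I.1)
      (gcdFactor a.natAbs s (-w) * riemannZeta s) := by
  have hinj : Function.Injective fun n : ℕ+ ↦ linearIdeal a n :=
    (linearIdeal_injective a).comp PNat.coe_injective
  rw [finiteIndexIdeals_X_sub_C]
  refine (hinj.hasSum_range_iff (f := idealWeight s w)).2 ?_
  refine (hasSum_gcd_cpow_mul (Int.natAbs_ne_zero.2 ha) hs (-w)).congr_fun fun n ↦ ?_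
  simp only [Function.comp_apply, idealWeight, cardQuot_linearIdeal, constNorm_linearIdeal]

end

/-! ### The ideal zeta function -/

section

open Complex

lemma idealCount_eq_ncard_of_surjective {A : Type*} {B : Type} [CommRing A] [CommRing B]
    {f : A →+* B} (hf : Function.Surjective f) (k : ℕ) :
    idealCount B k = {I : Ideal A | RingHom.ker f ≤ I ∧ I.cardQuot = k}.ncard := by
  rw [idealCount, ← Set.ncard_image_of_injective _ (Ideal.comap_injective_of_surjective f hf)]
  congr 1
  ext I
  constructor
  · rintro ⟨J, hJ, rfl⟩
    exact ⟨Ideal.comap_mono bot_le, (cardQuot_comap_of_surjective hf J).trans hJ⟩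
  · rintro ⟨hker, hI⟩
    have hcomap : (I.map f).comap f = I := by
      rw [Ideal.comap_map_of_surjective' f hf, sup_eq_left.2 hker]
    exact ⟨I.map f, (cardQuot_comap_of_surjective hf _).symm.trans (hcomap.symm ▸ hI), hcomap⟩

lemma idealCount_quotient_span {A : Type} [CommRing A] (h : A) (k : ℕ) :
    idealCount (A ⧸ Ideal.span {h}) k = {I : Ideal A | h ∈ I ∧ I.cardQuot = k}.ncard := by
  rw [idealCount_eq_ncard_of_surjective (Ideal.Quotient.mk_surjective (I := Ideal.span {h})),
    Ideal.mk_ker]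
  simp only [Ideal.span_singleton_le_iff_mem]

theorem hasSum_idealCount {A : Type} [CommRing A] {h : A} {s a : ℂ}
    (ha : HasSum (fun I : finiteIndexIdeals h ↦ (I.1.cardQuot : ℂ) ^ (-s)) a) :
    HasSum (fun k : ℕ+ ↦ (idealCount (A ⧸ Ideal.span {h}) k : ℂ) / (k : ℂ) ^ s) a := by
  let index (I : finiteIndexIdeals h) : ℕ+ := ⟨I.1.cardQuot, I.2.2.bot_lt⟩
  have hcard (k : ℕ+) : Nat.card (index ⁻¹' {k}) = idealCount (A ⧸ Ideal.span {h}) k := by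
    rw [idealCount_quotient_span, Nat.card_coe_set_eq,
      ← Set.ncard_image_of_injective _ Subtype.val_injective]
    congr 1
    ext I
    constructor
    · rintro ⟨I, hI, rfl⟩
      exact ⟨I.2.1, congrArg PNat.val hI⟩
    · rintro ⟨hI, hk⟩
      exact ⟨⟨I, hI, hk ▸ k.ne_zero⟩, PNat.eq hk, rfl⟩
  refine (ha.tsum_fiberwise index).congr_fun fun k ↦ ?_
  have hterm (I : index ⁻¹' {k}) : (I.1.1.cardQuot : ℂ) ^ (-s) = (k : ℂ) ^ (-s) := by
    obtain ⟨I, rfl⟩ := I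
    rfl
  rw [tsum_congr hterm, tsum_const, hcard, nsmul_eq_mul, cpow_neg, div_eq_mul_inv]

theorem hasSum_idealCount_X_sq_mul_X_sub_C {a : ℤ} (ha : a ≠ 0) {s : ℂ} (hs : 1 < s.re) :
    HasSum (fun k : ℕ+ ↦
        (idealCount (ℤ[X] ⧸ Ideal.span {(X : ℤ[X]) ^ 2 * (X - C a)}) k : ℂ) / (k : ℂ) ^ s)
      (riemannZeta s * (riemannZeta (2 * s - 1) *
        (gcdFactor a.natAbs s (2 - 2 * s) * riemannZeta s))) := by
  have hlinear := hasSum_idealWeight_X_sub_C ha hs (2 * s - 2)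
  have hX : HasSum (fun I : finiteIndexIdeals (X * (X - C a)) ↦ idealWeight s (s - 1) I.1)
      (riemannZeta (2 * s - 1) * (gcdFactor a.natAbs s (2 - 2 * s) * riemannZeta s)) := by
    have hadd : s + (s - 1) = 2 * s - 1 := by ring
    have hsub : 2 * s - 1 - 1 = 2 * s - 2 := by ring
    have hre : 1 < (s + (s - 1)).re := by
      rw [add_re, sub_re, one_re]
      linarith
    rw [← hadd]
    refine hasSum_idealWeight_X_mul hre ?_
    rwa [hadd, hsub, ← neg_sub (2 * s)]
  have hXX : HasSum (fun I : finiteIndexIdeals (X * (X * (X - C a))) ↦ idealWeight s 0 I.1)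
      (riemannZeta s * (riemannZeta (2 * s - 1) *
        (gcdFactor a.natAbs s (2 - 2 * s) * riemannZeta s))) := by
    have := hasSum_idealWeight_X_mul (s := s) (w := 0) (by rwa [add_zero]) (by rwa [add_zero])
    rwa [add_zero] at this
  simp only [idealWeight_zero_right] at hXX
  rw [pow_two, mul_assoc]
  exact hasSum_idealCount hXX

end

end

/-- For `f = X²(X - λ)` with `λ ∈ ℤ` nonzero, the ideal zeta function of `ℤ[X]/(f)`
converges for `Re s > 1` and has a pole of order `3` at `s = 1`. -/
theorem ideal_zeta_lambda_pole_order_three (lam : ℤ) (hlam : lam ≠ 0) :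
    ∃ δ > (0 : ℝ), ∃ g : ℂ → ℂ,
      DifferentiableOn ℂ g {s : ℂ | 1 - δ < s.re} ∧ g 1 ≠ 0 ∧
      ∀ s : ℂ, 1 < s.re →
        HasSum
          (fun k : ℕ+ =>
            (idealCount
              (Polynomial ℤ ⧸ Ideal.span
                {(Polynomial.X : Polynomial ℤ) ^ 2 * (Polynomial.X - Polynomial.C lam)}) k : ℂ) /
              (k : ℂ) ^ s)
          (g s / (s - 1) ^ 3) := by
  obtain ⟨ξ, hξ, hξ₁, hξζ⟩ := exists_differentiable_eq_sub_one_mul_riemannZeta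
  have hfactor : Differentiable ℂ fun s ↦ gcdFactor lam.natAbs s (2 - 2 * s) :=
    differentiable_gcdFactor _ differentiable_fun_id (by fun_prop)
  have hξ' : Differentiable ℂ fun s ↦ ξ (2 * s - 1) := hξ.comp (by fun_prop)
  refine ⟨1, one_pos, fun s ↦ ξ s ^ 2 * ξ (2 * s - 1) / 2 * gcdFactor lam.natAbs s (2 - 2 * s),
    ((((hξ.pow 2).mul hξ').div_const 2).mul hfactor).differentiableOn, ?_, fun s hs ↦ ?_⟩
  · norm_num [hξ₁, gcdFactor_zero_right (Int.natAbs_ne_zero.2 hlam)]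
  · have hs₁ : s ≠ 1 := by rintro rfl; exact lt_irrefl _ hs
    have hs₁' : s - 1 ≠ 0 := sub_ne_zero.2 hs₁
    have hs₂ : 2 * s - 1 ≠ 1 := fun h ↦ hs₁ (by linear_combination h / 2)
    convert hasSum_idealCount_X_sq_mul_X_sub_C hlam hs using 1
    simp only [hξζ s hs₁, hξζ _ hs₂]
    field_simp
    ring
end

section
/- Let p be a prime, n a positive integer, and l a non-negative integer. Then the number of ideals I of ℤ[X]/(X^n) such that the quotient is finite with exactly p^l elements equals the sum, over all n-tuples of non-negative integers (b_1, ..., b_n) with b_1 ≤ b_2 ≤ ... ≤ b_n and b_1 + ... + b_n = l, of p^{b_1 + b_2 + ... + b_{n−1}}. -/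
/-! If `R ⧸ (x) ≅ ℤ`, an ideal `I` of finite index containing `x ^ n` has an increasing chain of
initial ideals `(I : x ^ i) + (x)`, each equal to `(d) + (x)` for a positive integer `d`, and the
index of `I` is the product of these `d`. To count the ideals with a given chain, recover `I` from
`J = (I : x)` and its image `(d)` modulo `x`: it is `(d - x g) + x J`, where `g` matters only modulo
`J` and must satisfy `x g ≡ d` modulo `J`. The solutions `g` form a torsor under the annihilator of
`x` in `R ⧸ J`, which has as many elements as `R ⧸ (J + (x))`. So every initial ideal except the one
for `i = 0` contributes its index as a factor. -/

open Finset Ideal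

section Index

theorem card_quotient_comap {R S : Type*} [CommRing R] [CommRing S] {f : R →+* S}
    (hf : Function.Surjective f) (I : Ideal S) :
    Nat.card (R ⧸ I.comap f) = Nat.card (S ⧸ I) :=
  AddSubgroup.index_comap_of_surjective I.toAddSubgroup (f := (f : R →+ S)) hf

theorem card_quotient_dvd_of_le {R : Type*} [CommRing R] {I J : Ideal R} (h : I ≤ J) :
    Nat.card (R ⧸ J) ∣ Nat.card (R ⧸ I) :=
  AddSubgroup.index_dvd_of_le (Submodule.toAddSubgroup_mono h)

theorem card_quotient_eq_card_colon_mul_card_sup {R : Type*} [CommRing R] (I : Ideal R) (x : R) :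
    Nat.card (R ⧸ I) = Nat.card (R ⧸ I.colon {x}) * Nat.card (R ⧸ (I ⊔ span {x})) := by
  have hcolon : (I.colon {x}).toAddSubgroup = I.toAddSubgroup.comap (AddMonoidHom.mulRight x) := by
    ext a
    exact Submodule.mem_colon_singleton
  have hrange : (AddMonoidHom.mulRight x).range = (span {x}).toAddSubgroup := by
    ext a
    exact mem_span_singleton'.symm
  calc I.toAddSubgroup.index
      = I.toAddSubgroup.relIndex (I ⊔ span {x}).toAddSubgroup *
          (I ⊔ span {x}).toAddSubgroup.index :=
        (AddSubgroup.relIndex_mul_index (Submodule.toAddSubgroup_mono le_sup_left)).symm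
    _ = (I.colon {x}).toAddSubgroup.index * (I ⊔ span {x}).toAddSubgroup.index := by
        rw [hcolon, AddSubgroup.index_comap, hrange, Submodule.sup_toAddSubgroup, sup_comm,
          AddSubgroup.relIndex_sup_right]

theorem card_mul_eq_of_dvd {R : Type*} [CommRing R] [Finite R] {y c : R} (h : y ∣ c) :
    Nat.card {g // y * g = c} = Nat.card (R ⧸ span {y}) := by
  obtain ⟨a, rfl⟩ := h
  have hrange : (AddMonoidHom.mulLeft y).range = (span {y}).toAddSubgroup := by
    ext b
    simp [mem_span_singleton, dvd_def, eq_comm]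
  calc Nat.card {g // y * g = y * a}
      = Nat.card (AddMonoidHom.mulLeft y).ker :=
        Nat.card_congr (AddMonoidHom.fiberEquivKer (AddMonoidHom.mulLeft y) a)
    _ = (span {y}).toAddSubgroup.index := by rw [← AddSubgroup.index_range, hrange]

theorem card_quotient_mul_eq {R : Type*} [CommRing R] {J : Ideal R} [Finite (R ⧸ J)] {x d : R}
    (h : d ∈ J ⊔ span {x}) :
    Nat.card {g : R ⧸ J // Ideal.Quotient.mk J x * g = Ideal.Quotient.mk J d} =
      Nat.card (R ⧸ (J ⊔ span {x})) := by
  have hdvd : Ideal.Quotient.mk J x ∣ Ideal.Quotient.mk J d := by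
    rw [sup_comm, mem_span_singleton_sup] at h
    obtain ⟨a, j, hj, rfl⟩ := h
    exact ⟨Ideal.Quotient.mk J a, by
      rw [map_add, Ideal.Quotient.eq_zero_iff_mem.2 hj, add_zero, map_mul, mul_comm]⟩
  rw [card_mul_eq_of_dvd hdvd, ← Set.image_singleton, ← map_span]
  exact Nat.card_congr (DoubleQuot.quotQuotEquivQuotSup J (span {x})).toEquiv

theorem idealCount_quotient (R : Type) [CommRing R] (K : Ideal R) (k : ℕ) :
    idealCount (R ⧸ K) k = {I : Ideal R | K ≤ I ∧ Nat.card (R ⧸ I) = k}.ncard := by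
  have hmk : Function.Surjective (Ideal.Quotient.mk K) := Ideal.Quotient.mk_surjective
  rw [idealCount, ← Set.ncard_image_of_injective _ (comap_injective_of_surjective _ hmk)]
  congr 1
  ext I
  constructor
  · rintro ⟨I, hI, rfl⟩
    exact ⟨mk_ker.ge.trans (ker_le_comap _), (card_quotient_comap hmk I).trans hI⟩
  · rintro ⟨hKI, hI⟩
    have hcomap : (I.map (Ideal.Quotient.mk K)).comap (Ideal.Quotient.mk K) = I := by
      rw [comap_map_of_surjective' _ hmk, mk_ker, sup_eq_left.2 hKI]
    exact ⟨I.map (Ideal.Quotient.mk K), by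
      rw [Set.mem_ofPred_eq, ← card_quotient_comap hmk, hcomap, hI], hcomap⟩

end Index

section ColonFiber

variable {R : Type*} [CommRing R] {x : R} {I J : Ideal R} {d f : R}

theorem span_mul_colon_singleton (x : R) (I : Ideal R) :
    span {x} * I.colon {x} = I ⊓ span {x} := by
  ext a
  simp only [mem_span_singleton_mul, Submodule.mem_colon_singleton, smul_eq_mul, Submodule.mem_inf,
    mem_span_singleton']
  constructor
  · rintro ⟨b, hb, rfl⟩
    exact ⟨mul_comm b x ▸ hb, b, mul_comm b x⟩
  · rintro ⟨ha, b, rfl⟩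
    exact ⟨b, ha, mul_comm x b⟩

theorem span_sup_span_mul_colon_eq (hf : f ∈ I) (hI : I ≤ span {f} ⊔ span {x}) :
    span {f} ⊔ span {x} * I.colon {x} = I := by
  rw [span_mul_colon_singleton, inf_comm, ← sup_inf_assoc_of_le _
    ((span_singleton_le_iff_mem I).2 hf), inf_eq_right.2 hI]

theorem span_sup_span_mul_sup_span (f x : R) (J : Ideal R) :
    span {f} ⊔ span {x} * J ⊔ span {x} = span {f} ⊔ span {x} := by
  rw [sup_assoc, sup_eq_right.2 (mul_le_left : span {x} * J ≤ span {x})]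

theorem colon_span_sup_span_mul (hx : IsSMulRegular R x) (hf : IsSMulRegular (R ⧸ span {x}) f)
    (hfJ : f ∈ J) : (span {f} ⊔ span {x} * J).colon {x} = J := by
  rw [isSMulRegular_quotient_iff_mem_of_smul_mem] at hf
  ext a
  rw [Submodule.mem_colon_singleton, mem_span_singleton_sup]
  constructor
  · rintro ⟨b, c, hc, e⟩
    obtain ⟨j, hj, rfl⟩ := mem_span_singleton_mul.1 hc
    have hb : b ∈ span {x} := hf b <| mem_span_singleton'.2
      ⟨a - j, by simp only [smul_eq_mul] at e ⊢; linear_combination -e⟩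
    obtain ⟨b, rfl⟩ := mem_span_singleton'.1 hb
    have ha : a = b * f + j := hx (by simp only [smul_eq_mul] at e ⊢; linear_combination -e)
    exact ha ▸ J.add_mem (J.mul_mem_left b hfJ) hj
  · intro ha
    exact ⟨0, x * a, mem_span_singleton_mul.2 ⟨a, ha, rfl⟩, by simp [mul_comm]⟩

theorem span_sub_mul_sup_span (d x g : R) : span {d - x * g} ⊔ span {x} = span {d} ⊔ span {x} := by
  rw [← span_insert, ← span_insert, sub_eq_add_neg, ← mul_neg, mul_comm x,
    span_pair_add_mul_right]

theorem isSMulRegular_quotient_sub_mul (hd : IsSMulRegular (R ⧸ span {x}) d) (g : R) :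
    IsSMulRegular (R ⧸ span {x}) (d - x * g) := by
  rw [isSMulRegular_quotient_iff_mem_of_smul_mem] at hd ⊢
  intro a ha
  refine hd a ?_
  convert add_mem ha ((span {x}).mul_mem_left (g * a) (mem_span_singleton_self x)) using 1
  simp only [smul_eq_mul]
  ring

/-- The ideals with colon ideal `J` along `x` and with the same image in `R ⧸ (x)` as `(d)`. -/
def colonFiber (x : R) (J : Ideal R) (d : R) : Set (Ideal R) :=
  {I | I.colon {x} = J ∧ I ⊔ span {x} = span {d} ⊔ span {x}}

theorem exists_sub_mul_mem (hI : I ∈ colonFiber x J d) : ∃ g, d - x * g ∈ I := by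
  have hd : d ∈ I ⊔ span {x} := hI.2 ▸ mem_sup_left (mem_span_singleton_self d)
  obtain ⟨f, hf, y, hy, rfl⟩ := Submodule.mem_sup.1 hd
  obtain ⟨g, rfl⟩ := mem_span_singleton.1 hy
  exact ⟨g, by simpa⟩

theorem sub_mul_mem_iff_of_mem_colonFiber (hI : I ∈ colonFiber x J d) {g g' : R}
    (hg : d - x * g ∈ I) : d - x * g' ∈ I ↔ g - g' ∈ J := by
  have hsplit : d - x * g' = (d - x * g) + (g - g') * x := by ring
  rw [hsplit, I.add_mem_iff_right hg, ← hI.1, Submodule.mem_colon_singleton, smul_eq_mul]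

theorem eq_of_mem_colonFiber (hI : I ∈ colonFiber x J d) {g : R} (hg : d - x * g ∈ I) :
    span {d - x * g} ⊔ span {x} * J = I := by
  rw [← hI.1]
  refine span_sup_span_mul_colon_eq hg ?_
  rw [span_sub_mul_sup_span, ← hI.2]
  exact le_sup_left

theorem span_sup_span_mul_mem_colonFiber (hx : IsSMulRegular R x)
    (hd : IsSMulRegular (R ⧸ span {x}) d) {g : R} (hg : d - x * g ∈ J) :
    span {d - x * g} ⊔ span {x} * J ∈ colonFiber x J d :=
  ⟨colon_span_sup_span_mul hx (isSMulRegular_quotient_sub_mul hd g) hg,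
    by rw [span_sup_span_mul_sup_span, span_sub_mul_sup_span]⟩

theorem card_colonFiber [Finite (R ⧸ J)] (hx : IsSMulRegular R x)
    (hd : IsSMulRegular (R ⧸ span {x}) d) (hdJ : d ∈ J ⊔ span {x}) :
    Nat.card (colonFiber x J d) = Nat.card (R ⧸ (J ⊔ span {x})) := by
  rw [← card_quotient_mul_eq hdJ]
  have hsol {g : R} : Ideal.Quotient.mk J x * Ideal.Quotient.mk J g = Ideal.Quotient.mk J d ↔
      d - x * g ∈ J := by
    rw [← map_mul, eq_comm, Ideal.Quotient.eq]
  choose g hg using fun I : colonFiber x J d ↦ exists_sub_mul_mem I.2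
  have hgJ (I : colonFiber x J d) : d - x * g I ∈ J := I.2.1 ▸ le_colon (hg I)
  refine Nat.card_eq_of_bijective (fun I ↦ ⟨Ideal.Quotient.mk J (g I), hsol.2 (hgJ I)⟩) ⟨?_, ?_⟩
  · intro I I' h
    have hgg' : g I - g I' ∈ J := Ideal.Quotient.eq.1 (congrArg Subtype.val h)
    have hgI' : d - x * g I' ∈ I.1 := (sub_mul_mem_iff_of_mem_colonFiber I.2 (hg I)).2 hgg'
    exact Subtype.ext <| (eq_of_mem_colonFiber I.2 hgI').symm.trans
      (eq_of_mem_colonFiber I'.2 (hg I'))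
  · rintro ⟨γ, hγ⟩
    obtain ⟨a, rfl⟩ := Ideal.Quotient.mk_surjective γ
    have hI := span_sup_span_mul_mem_colonFiber hx hd (hsol.1 hγ)
    have ha : d - x * a ∈ span {d - x * a} ⊔ span {x} * J :=
      mem_sup_left (mem_span_singleton_self _)
    exact ⟨⟨_, hI⟩, Subtype.ext <| Ideal.Quotient.eq.2 <|
      (sub_mul_mem_iff_of_mem_colonFiber hI (hg ⟨_, hI⟩)).1 ha⟩

end ColonFiber

theorem card_sigma_of_card_eq {α : Type*} {β : α → Type*} {c : ℕ} (h : ∀ a, Nat.card (β a) = c) :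
    Nat.card (Σ a, β a) = Nat.card α * c := by
  rcases eq_or_ne c 0 with rfl | hc
  · rw [mul_zero, Nat.card_eq_zero]
    by_cases hempty : ∀ a, IsEmpty (β a)
    · exact .inl (isEmpty_sigma.2 hempty)
    · obtain ⟨a, ha⟩ := not_forall.1 hempty
      have : Infinite (β a) := (Nat.card_eq_zero.1 (h a)).resolve_left ha
      exact .inr (Infinite.of_injective (Sigma.mk a) sigma_mk_injective)
  have e (a : α) : β a ≃ Fin c := by
    have : Finite (β a) := Nat.finite_of_card_ne_zero (h a ▸ hc)
    exact Finite.equivFinOfCardEq (h a)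
  rw [Nat.card_congr ((Equiv.sigmaCongrRight e).trans (Equiv.sigmaEquivProd α (Fin c))),
    Nat.card_prod, Nat.card_fin]

section InitialIdeal

variable {R : Type*} [CommRing R] {x : R} {I J : Ideal R} {n : ℕ}

/-- The ideal `(I : x ^ i) + (x)`. For `x = X` in a polynomial ring, its constant coefficients are
the coefficients of `X ^ i` in the elements of `I` divisible by `X ^ i`. -/
def initialIdeal (x : R) (I : Ideal R) (i : ℕ) : Ideal R :=
  I.colon {x ^ i} ⊔ span {x}

theorem initialIdeal_zero (x : R) (I : Ideal R) : initialIdeal x I 0 = I ⊔ span {x} := by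
  have hcolon : I.colon {x ^ 0} = I := by
    ext a
    simp
  rw [initialIdeal, hcolon]

theorem initialIdeal_colon (x : R) (I : Ideal R) (i : ℕ) :
    initialIdeal x (I.colon {x}) i = initialIdeal x I (i + 1) := by
  have hcolon : (I.colon {x}).colon {x ^ i} = I.colon {x ^ (i + 1)} := by
    ext a
    simp [pow_succ, mul_assoc]
  rw [initialIdeal, hcolon, initialIdeal]

theorem self_mem_initialIdeal (x : R) (I : Ideal R) (i : ℕ) : x ∈ initialIdeal x I i :=
  mem_sup_right (mem_span_singleton_self x)

theorem initialIdeal_mono (x : R) (I : Ideal R) : Monotone (initialIdeal x I) := by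
  refine monotone_nat_of_le_succ fun i ↦ sup_le_sup_right (fun a ha ↦ ?_) _
  rw [Submodule.mem_colon_singleton, smul_eq_mul] at ha ⊢
  rw [pow_succ, ← mul_assoc]
  exact I.mul_mem_right x ha

theorem pow_mem_colon_singleton_iff : x ^ n ∈ I.colon {x} ↔ x ^ (n + 1) ∈ I := by
  rw [Submodule.mem_colon_singleton, smul_eq_mul, pow_succ]

theorem card_quotient_eq_prod_initialIdeal (h : x ^ n ∈ I) :
    Nat.card (R ⧸ I) = ∏ i : Fin n, Nat.card (R ⧸ initialIdeal x I i.rev) := by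
  induction n generalizing I with
  | zero =>
    rw [pow_zero, ← eq_top_iff_one] at h
    subst h
    simp
  | succ n ih =>
    rw [card_quotient_eq_card_colon_mul_card_sup I x, ih (pow_mem_colon_singleton_iff.2 h),
      Fin.prod_univ_castSucc]
    simp only [initialIdeal_colon, Fin.rev_castSucc, Fin.val_succ, Fin.rev_last, Fin.val_zero,
      initialIdeal_zero]

/-- The ideals containing `x ^ n` whose initial ideals are `(d i) + (x)`, indexed by decreasing
powers of `x`: the last entry of `d` describes the image of the ideal in `R ⧸ (x)`. -/
def idealsWithInitial (x : R) (d : Fin n → R) : Set (Ideal R) :=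
  {I | x ^ n ∈ I ∧ ∀ i : Fin n, initialIdeal x I i.rev = span {d i} ⊔ span {x}}

theorem card_quotient_of_mem_idealsWithInitial {d : Fin n → R} (hI : I ∈ idealsWithInitial x d) :
    Nat.card (R ⧸ I) = ∏ i, Nat.card (R ⧸ (span {d i} ⊔ span {x})) := by
  rw [card_quotient_eq_prod_initialIdeal hI.1]
  exact prod_congr rfl fun i _ ↦ by rw [hI.2]

theorem finite_quotient_of_mem_idealsWithInitial {d : Fin n → R}
    (hfin : ∀ i, Finite (R ⧸ (span {d i} ⊔ span {x}))) (hI : I ∈ idealsWithInitial x d) :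
    Finite (R ⧸ I) := Nat.finite_of_card_ne_zero <| by
  rw [card_quotient_of_mem_idealsWithInitial hI]
  exact prod_ne_zero_iff.2 fun i _ ↦ Nat.card_ne_zero.2 ⟨inferInstance, hfin i⟩

theorem mem_idealsWithInitial_succ {d : Fin (n + 1) → R} :
    I ∈ idealsWithInitial x d ↔
      I.colon {x} ∈ idealsWithInitial x (Fin.init d) ∧
        I ⊔ span {x} = span {d (Fin.last n)} ⊔ span {x} := by
  simp only [idealsWithInitial, Set.mem_ofPred_eq, pow_mem_colon_singleton_iff, initialIdeal_colon,
    Fin.forall_fin_succ', Fin.rev_castSucc, Fin.val_succ, Fin.rev_last, Fin.val_zero,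
    initialIdeal_zero, Fin.init, and_assoc]

/-- An ideal with prescribed initial ideals is determined by its colon ideal along `x` together with
its place in the corresponding `colonFiber`. -/
def idealsWithInitialEquivSigma (x : R) (d : Fin (n + 1) → R) :
    idealsWithInitial x d ≃
      Σ J : idealsWithInitial x (Fin.init d), colonFiber x (J : Ideal R) (d (Fin.last n)) where
  toFun I := ⟨⟨I.1.colon {x}, (mem_idealsWithInitial_succ.1 I.2).1⟩, I.1, rfl,
    (mem_idealsWithInitial_succ.1 I.2).2⟩
  invFun J := ⟨J.2.1, mem_idealsWithInitial_succ.2 ⟨by rw [J.2.2.1]; exact J.1.2, J.2.2.2⟩⟩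
  left_inv _ := rfl
  right_inv := by
    rintro ⟨⟨J, hJ⟩, I, hIJ : I.colon {x} = J, hI⟩
    subst hIJ
    rfl

theorem card_idealsWithInitial_one (d : Fin 1 → R) : Nat.card (idealsWithInitial x d) = 1 := by
  have hsingleton : idealsWithInitial x d = {span {d 0} ⊔ span {x}} := by
    ext I
    simp only [idealsWithInitial, pow_one, Fin.forall_fin_one, Fin.rev_zero, Fin.last_zero,
      Fin.val_zero, initialIdeal_zero, Set.mem_ofPred_eq, Set.mem_singleton_iff]
    constructor
    · rintro ⟨hxI, hI⟩
      rwa [sup_eq_left.2 ((span_singleton_le_iff_mem I).2 hxI)] at hI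
    · rintro rfl
      exact ⟨mem_sup_right (mem_span_singleton_self x), by rw [sup_assoc, sup_idem]⟩
  rw [hsingleton, Nat.card_unique]

theorem card_idealsWithInitial (hx : IsSMulRegular R x) {d : Fin (n + 1) → R}
    (hreg : ∀ i, IsSMulRegular (R ⧸ span {x}) (d i))
    (hfin : ∀ i, Finite (R ⧸ (span {d i} ⊔ span {x})))
    (hd : ∀ i j, i ≤ j → d j ∈ span {d i} ⊔ span {x}) :
    Nat.card (idealsWithInitial x d) =
      ∏ i : Fin n, Nat.card (R ⧸ (span {d i.castSucc} ⊔ span {x})) := by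
  induction n with
  | zero => rw [card_idealsWithInitial_one, Fin.prod_univ_zero]
  | succ n ih =>
    have hfiber (J : idealsWithInitial x (Fin.init d)) :
        Nat.card (colonFiber x (J : Ideal R) (d (Fin.last (n + 1)))) =
          Nat.card (R ⧸ (span {d (Fin.last n).castSucc} ⊔ span {x})) := by
      have hJ : (J : Ideal R) ⊔ span {x} = span {d (Fin.last n).castSucc} ⊔ span {x} :=
        (mem_idealsWithInitial_succ.1 J.2).2
      have := finite_quotient_of_mem_idealsWithInitial (fun i ↦ hfin i.castSucc) J.2
      rw [card_colonFiber hx (hreg _) (hJ ▸ hd _ _ (Fin.le_last _)), hJ]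
    rw [Nat.card_congr (idealsWithInitialEquivSigma x d), card_sigma_of_card_eq hfiber,
      Fin.prod_univ_castSucc,
      ih (d := Fin.init d) (fun i ↦ hreg i.castSucc) (fun i ↦ hfin i.castSucc)
        (fun i j hij ↦ hd i.castSucc j.castSucc hij)]
    rfl

end InitialIdeal

section DivisorChains

/-- The sequences `d 0 ∣ d 1 ∣ ⋯ ∣ d (n - 1)` of natural numbers with product `k`; there are none if
`k = 0`. They are the possible indices of the initial ideals of an ideal of index `k`. -/
def divisorChains (n k : ℕ) : Finset (Fin n → ℕ) :=
  {d ∈ Nat.finMulAntidiag n k | ∀ i j : Fin n, i ≤ j → d i ∣ d j}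

variable {n k : ℕ} {d : Fin n → ℕ}

theorem mem_divisorChains :
    d ∈ divisorChains n k ↔ (∏ i, d i = k ∧ k ≠ 0) ∧ ∀ i j, i ≤ j → d i ∣ d j := by
  rw [divisorChains, mem_filter, Nat.mem_finMulAntidiag]

theorem ne_zero_of_mem_divisorChains (hd : d ∈ divisorChains n k) (i : Fin n) : d i ≠ 0 :=
  Nat.ne_zero_of_mem_finMulAntidiag (mem_filter.1 hd).1 i

theorem sum_divisorChains_prime_pow {M : Type*} [AddCommMonoid M] {p : ℕ} (hp : p.Prime) (l : ℕ)
    (f : (Fin n → ℕ) → M) :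
    ∑ d ∈ divisorChains n (p ^ l), f d =
      ∑ b ∈ (Finset.Icc (fun _ => 0) (fun _ => l) : Finset (Fin n → ℕ)).filter
          (fun b => (∀ i j : Fin n, i ≤ j → b i ≤ b j) ∧ ∑ i, b i = l),
        f fun i ↦ p ^ b i := by
  symm
  refine sum_nbij (fun b i ↦ p ^ b i) ?_ ?_ ?_ fun _ _ ↦ rfl
  · intro b hb
    obtain ⟨-, hmono, hsum⟩ := mem_filter.1 hb
    refine mem_divisorChains.2
      ⟨⟨?_, pow_ne_zero l hp.ne_zero⟩, fun i j hij ↦ pow_dvd_pow p (hmono i j hij)⟩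
    rw [prod_pow_eq_pow_sum, hsum]
  · intro b _ b' _ h
    exact funext fun i ↦ Nat.pow_right_injective hp.two_le (congrFun h i)
  · intro d hd
    obtain ⟨⟨hprod, -⟩, hdvd⟩ := mem_divisorChains.1 hd
    have hpow (i) : ∃ m ≤ l, d i = p ^ m :=
      (Nat.dvd_prime_pow hp).1 (hprod ▸ dvd_prod_of_mem d (mem_univ i))
    choose b hbl hb using hpow
    obtain rfl : d = fun i ↦ p ^ b i := funext hb
    rw [prod_pow_eq_pow_sum] at hprod
    refine ⟨b, ?_, rfl⟩
    exact mem_filter.2 ⟨mem_Icc.2 ⟨fun _ ↦ Nat.zero_le _, hbl⟩,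
      fun i j hij ↦ (Nat.pow_dvd_pow_iff_le_right hp.one_lt).1 (hdvd i j hij),
      Nat.pow_right_injective hp.two_le hprod⟩

end DivisorChains

section IntegerResidue

variable {R : Type*} [CommRing R] {φ : R →+* ℤ} {x : R} {n : ℕ}

theorem surjective_ringHom_int (φ : R →+* ℤ) : Function.Surjective φ :=
  fun a ↦ ⟨a, by rw [map_intCast, Int.cast_id]⟩

theorem comap_span_natCast (hφ : RingHom.ker φ = span {x}) (d : ℕ) :
    (span {(d : ℤ)}).comap φ = span {(d : R)} ⊔ span {x} := by
  rw [← hφ, ← comap_map_of_surjective' φ (surjective_ringHom_int φ), map_span,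
    Set.image_singleton, map_natCast]

theorem card_quotient_span_natCast_sup (hφ : RingHom.ker φ = span {x}) (d : ℕ) :
    Nat.card (R ⧸ (span {(d : R)} ⊔ span {x})) = d := by
  rw [← comap_span_natCast hφ, card_quotient_comap (surjective_ringHom_int φ),
    Nat.card_congr (Int.quotientSpanNatEquivZMod d).toEquiv, Nat.card_zmod]

theorem eq_span_natCast_sup_iff (hφ : RingHom.ker φ = span {x}) {K : Ideal R} (hxK : x ∈ K)
    {d : ℕ} :
    K = span {(d : R)} ⊔ span {x} ↔ Nat.card (R ⧸ K) = d := by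
  have hK : K = span {((K.map φ).absNorm : R)} ⊔ span {x} := by
    rw [← comap_span_natCast hφ, Int.ideal_span_absNorm_eq_self,
      comap_map_of_surjective' φ (surjective_ringHom_int φ), hφ,
      sup_eq_left.2 ((span_singleton_le_iff_mem K).2 hxK)]
  refine ⟨fun h ↦ h ▸ card_quotient_span_natCast_sup hφ d, fun h ↦ ?_⟩
  rw [hK, card_quotient_span_natCast_sup hφ] at h
  rwa [h] at hK

theorem isSMulRegular_quotient_natCast (hφ : RingHom.ker φ = span {x}) {d : ℕ} (hd : d ≠ 0) :
    IsSMulRegular (R ⧸ span {x}) (d : R) := by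
  rw [isSMulRegular_quotient_iff_mem_of_smul_mem, ← hφ]
  intro a ha
  simpa [RingHom.mem_ker, hd] using ha

theorem mem_idealsWithInitial_natCast_iff (hφ : RingHom.ker φ = span {x}) {d : Fin n → ℕ}
    {I : Ideal R} : I ∈ idealsWithInitial x (fun i ↦ (d i : R)) ↔
      x ^ n ∈ I ∧ ∀ i : Fin n, Nat.card (R ⧸ initialIdeal x I i.rev) = d i := by
  simp only [idealsWithInitial, Set.mem_ofPred_eq,
    eq_span_natCast_sup_iff hφ (self_mem_initialIdeal x _ _)]

theorem card_idealsWithInitial_natCast (hφ : RingHom.ker φ = span {x}) (hx : IsSMulRegular R x)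
    {d : Fin (n + 1) → ℕ} (hd : ∀ i, d i ≠ 0) (hdvd : ∀ i j, i ≤ j → d i ∣ d j) :
    Nat.card (idealsWithInitial x (fun i ↦ (d i : R))) = ∏ i : Fin n, d i.castSucc := by
  rw [card_idealsWithInitial hx (fun i ↦ isSMulRegular_quotient_natCast hφ (hd i))]
  · simp only [card_quotient_span_natCast_sup hφ]
  · exact fun i ↦ Nat.finite_of_card_ne_zero <| by
      rw [card_quotient_span_natCast_sup hφ]
      exact hd i
  · exact fun i j hij ↦ mem_sup_left <| mem_span_singleton.2 <| Nat.cast_dvd_cast <| hdvd i j hij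

theorem setOf_card_quotient_eq_biUnion_idealsWithInitial (hφ : RingHom.ker φ = span {x}) (n : ℕ)
    {k : ℕ} (hk : k ≠ 0) :
    {I : Ideal R | x ^ n ∈ I ∧ Nat.card (R ⧸ I) = k} =
      ⋃ d ∈ (divisorChains n k : Set (Fin n → ℕ)), idealsWithInitial x (fun i ↦ (d i : R)) := by
  ext I
  simp only [Set.mem_ofPred_eq, Set.mem_iUnion, mem_coe, mem_divisorChains, exists_prop]
  constructor
  · rintro ⟨hxI, rfl⟩
    exact ⟨fun i ↦ Nat.card (R ⧸ initialIdeal x I i.rev),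
      ⟨⟨(card_quotient_eq_prod_initialIdeal hxI).symm, hk⟩, fun i j hij ↦
        card_quotient_dvd_of_le (initialIdeal_mono x I (Fin.rev_le_rev.2 hij))⟩,
      (mem_idealsWithInitial_natCast_iff hφ).2 ⟨hxI, fun _ ↦ rfl⟩⟩
  · rintro ⟨d, ⟨⟨rfl, _⟩, _⟩, hI⟩
    refine ⟨hI.1, ?_⟩
    rw [card_quotient_of_mem_idealsWithInitial hI]
    simp only [card_quotient_span_natCast_sup hφ]

theorem disjoint_idealsWithInitial_natCast (hφ : RingHom.ker φ = span {x}) {d d' : Fin n → ℕ}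
    (h : d ≠ d') : Disjoint (idealsWithInitial x (fun i ↦ (d i : R)))
      (idealsWithInitial x (fun i ↦ (d' i : R))) := by
  refine Set.disjoint_left.2 fun I hI hI' ↦ h (funext fun i ↦ ?_)
  rw [mem_idealsWithInitial_natCast_iff hφ] at hI hI'
  exact (hI.2 i).symm.trans (hI'.2 i)

theorem ncard_pow_mem_card_quotient_eq (hφ : RingHom.ker φ = span {x}) (hx : IsSMulRegular R x)
    (n : ℕ) {k : ℕ} (hk : k ≠ 0) :
    {I : Ideal R | x ^ (n + 1) ∈ I ∧ Nat.card (R ⧸ I) = k}.ncard =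
      ∑ d ∈ divisorChains (n + 1) k, ∏ i : Fin n, d i.castSucc := by
  have hcard {d} (hd : d ∈ divisorChains (n + 1) k) :
      (idealsWithInitial x (fun i ↦ (d i : R))).ncard = ∏ i : Fin n, d i.castSucc :=
    card_idealsWithInitial_natCast hφ hx (ne_zero_of_mem_divisorChains hd)
      (mem_divisorChains.1 hd).2
  rw [setOf_card_quotient_eq_biUnion_idealsWithInitial hφ _ hk,
    (finite_toSet _).ncard_biUnion _ fun _ _ _ _ ↦ disjoint_idealsWithInitial_natCast hφ,
    finsum_mem_coe_finset]
  · exact sum_congr rfl fun d hd ↦ hcard hd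
  · intro d hd
    refine Set.finite_of_ncard_ne_zero ?_
    rw [hcard hd]
    exact prod_ne_zero_iff.2 fun i _ ↦ ne_zero_of_mem_divisorChains hd _

end IntegerResidue

theorem ideal_count_prime_power_int_poly_quot_pow_general {R : Type} [CommRing R] {φ : R →+* ℤ}
    {x : R} (hφ : RingHom.ker φ = span {x}) (hx : IsSMulRegular R x) {n : ℕ} (hn : 0 < n) {k : ℕ}
    (hk : k ≠ 0) :
    idealCount (R ⧸ span {x ^ n}) k =
      ∑ d ∈ divisorChains n k,
        ∏ i ∈ univ.erase (⟨n - 1, Nat.sub_lt hn Nat.one_pos⟩ : Fin n), d i := by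
  obtain ⟨n, rfl⟩ := Nat.exists_eq_succ_of_ne_zero hn.ne'
  have herase : univ.erase (Fin.last n) = univ.map Fin.castSuccEmb := by
    rw [Fin.univ_castSuccEmb, erase_cons]
  simp only [idealCount_quotient, span_singleton_le_iff_mem,
    ncard_pow_mem_card_quotient_eq hφ hx n hk]
  refine sum_congr rfl fun d _ ↦ ?_
  change _ = ∏ i ∈ univ.erase (Fin.last n), d i
  rw [herase, prod_map]
  rfl

/-- The number of ideals of `ℤ[X]/(X^n)` of index `p^l` equals the sum, over all
nondecreasing tuples `b_1 ≤ ⋯ ≤ b_n` of non-negative integers with `b_1 + ⋯ + b_n = l`,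
of `p^{b_1 + ⋯ + b_{n-1}}`. -/
theorem ideal_count_prime_power_int_poly_quot_pow (p : ℕ) (hp : p.Prime)
    (n : ℕ) (hn : 0 < n) (l : ℕ) :
    idealCount (Polynomial ℤ ⧸ Ideal.span {(Polynomial.X : Polynomial ℤ) ^ n}) (p ^ l) =
      ∑ b ∈ (Finset.Icc (fun _ => 0) (fun _ => l) : Finset (Fin n → ℕ)).filter
          (fun b => (∀ i j : Fin n, i ≤ j → b i ≤ b j) ∧ ∑ i, b i = l),
        p ^ (∑ i ∈ Finset.univ.erase (⟨n - 1, Nat.sub_lt hn Nat.one_pos⟩ : Fin n), b i) := by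
  rw [ideal_count_prime_power_int_poly_quot_pow_general Polynomial.ker_constantCoeff
    (IsRegular.of_ne_zero Polynomial.X_ne_zero).left.isSMulRegular hn (pow_ne_zero l hp.ne_zero),
    sum_divisorChains_prime_pow hp]
  simp only [prod_pow_eq_pow_sum]
end

section
/- Let n be a positive integer and let R = ℤ[X]/(X^n). Then the Dirichlet series Z(s) = Σ_{k≥1} a_R(k) k^{−s} converges for Re(s) > 1, and there exist δ > 0 and a function g holomorphic on {s ∈ ℂ : Re(s) > 1 − δ} with g(1) ≠ 0 such that Z(s) = g(s)·(s−1)^{−n} for all s with Re(s) > 1; that is, Z has a pole of order n at s = 1. -/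
/-!
Multiplication by `X` and evaluation at `0` show that an ideal `I` of `ℤ[X]` of finite index has
index `[ℤ[X] : J] * c(I)`, where `J = (I : X)` and `c(I)` is the positive generator of the ideal of
constant coefficients of `I`. Conversely `I` is determined by `J` and by any `f ∈ I` with constant
coefficient `c(I)`, as `I = (f) + X J`. Given `J` and a multiple `a` of `c(J)`, the polynomials
`f ∈ J` with constant coefficient `a` form a torsor under `X (J : X)`, and two of them yield the
same `I` exactly when they differ by an element of `X J`. So there are `[(J : X) : J] = c(J)`
ideals `I` with `(I : X) = J` and `c(I) = a`.

If `X ^ (n + 1) ∈ I` then `X ^ n ∈ J`, so the two-variable series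
`Tₙ(s, w) = ∑ [ℤ[X] : I]⁻ˢ c(I)⁻ʷ` over the ideals `I` of finite index containing `X ^ n` satisfies
`Tₙ₊₁(s, w) = Tₙ(s, s + w - 1) ζ(s + w)`. Hence the ideal zeta function is
`Tₙ(s, 0) = ∏ᵢ ζ(i (s - 1) + 1)` over `1 ≤ i ≤ n`, and each factor has a simple pole at `s = 1`.
-/

open Polynomial

namespace IdealZeta

section Summation

theorem hasSum_card_fiber_smul {α β E : Type*} [AddCommGroup E] [UniformSpace E]
    [IsUniformAddGroup E] [CompleteSpace E] [T2Space E] {φ : α → β} {f : β → E} {x : E}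
    (h : HasSum (fun a ↦ f (φ a)) x) :
    HasSum (fun b ↦ Nat.card {a // φ a = b} • f b) x := by
  rw [← (Equiv.sigmaFiberEquiv φ).hasSum_iff] at h
  refine h.sigma fun b ↦ ?_
  have hfiber := h.summable.sigma_factor b
  have hconst : (fun a : {a // φ a = b} ↦
      ((fun a ↦ f (φ a)) ∘ Equiv.sigmaFiberEquiv φ) ⟨b, a⟩) = fun _ ↦ f b :=
    funext fun a ↦ congrArg f a.2
  rw [hconst] at hfiber ⊢
  simpa only [tsum_const] using hfiber.hasSum

theorem hasSum_comp_of_hasSum_card_fiber_smul {α β E : Type*} [NormedAddCommGroup E]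
    [NormedSpace ℝ E] [FiniteDimensional ℝ E] {φ : α → β} (hφ : ∀ b, Finite {a // φ a = b})
    {f : β → E} {x : E} (h : HasSum (fun b ↦ Nat.card {a // φ a = b} • f b) x) :
    HasSum (fun a ↦ f (φ a)) x := by
  have := FiniteDimensional.complete ℝ E
  have hnorm : Summable fun a ↦ ‖f (φ a)‖ := by
    rw [← (Equiv.sigmaFiberEquiv φ).summable_iff]
    refine (summable_sigma_of_nonneg fun _ ↦ norm_nonneg _).2
      ⟨fun b ↦ summable_of_hasFiniteSupport (Set.toFinite _), ?_⟩
    refine h.summable.norm.congr fun b ↦ ?_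
    have hconst (a : {a // φ a = b}) :
        ‖f (φ (Equiv.sigmaFiberEquiv φ ⟨b, a⟩))‖ = ‖f b‖ :=
      congrArg (‖f ·‖) a.2
    simp only [hconst, tsum_const, RCLike.norm_nsmul ℝ]
  have hsum := hnorm.of_norm.hasSum
  rwa [(hasSum_card_fiber_smul hsum).unique h] at hsum

theorem hasSum_fst_mul_snd {ι κ A : Type*} [NormedRing A] [NormedSpace ℝ A]
    [FiniteDimensional ℝ A] {f : ι → A} {g : κ → A} {x y : A} (hf : HasSum f x)
    (hg : HasSum g y) : HasSum (fun p : ι × κ ↦ f p.1 * g p.2) (x * y) :=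
  have := FiniteDimensional.complete ℝ A
  hf.mul hg (summable_mul_of_summable_norm hf.summable.norm hg.summable.norm)

end Summation

section ConstantCoeff

variable {R : Type*} [CommRing R]

lemma mem_colon_X {I : Ideal R[X]} {f : R[X]} : f ∈ I.colon {X} ↔ X * f ∈ I := by
  rw [Submodule.mem_colon_singleton, smul_eq_mul, mul_comm]

lemma mem_map_constantCoeff {I : Ideal R[X]} {a : R} :
    a ∈ I.map constantCoeff ↔ ∃ f ∈ I, f.coeff 0 = a :=
  Ideal.mem_map_iff_of_surjective _ constantCoeff_surjective

lemma cardQuot_eq_cardQuot_colon_X_mul (I : Ideal R[X]) :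
    I.cardQuot = (I.colon {X}).cardQuot * (I.map constantCoeff).cardQuot := by
  let mulX : R[X] →+ R[X] := AddMonoidHom.mulLeft X
  let ev : R[X] →+ R := (constantCoeff : R[X] →+* R).toAddMonoidHom
  have hker : ev.ker = mulX.range := by
    ext f
    exact X_dvd_iff.symm.trans (by simp [mulX, Dvd.dvd, eq_comm])
  have hev : ev.range = ⊤ := AddMonoidHom.range_eq_top.2 constantCoeff_surjective
  have hcolon : (I.colon {X}).toAddSubgroup = I.toAddSubgroup.comap mulX :=
    AddSubgroup.ext fun f ↦ mem_colon_X
  have hmap : (I.map constantCoeff).toAddSubgroup = I.toAddSubgroup.map ev :=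
    AddSubgroup.ext fun a ↦ mem_map_constantCoeff
  calc I.toAddSubgroup.index
      = I.toAddSubgroup.relIndex mulX.range * (I.toAddSubgroup ⊔ mulX.range).index := by
        rw [← AddSubgroup.relIndex_sup_left, AddSubgroup.relIndex_mul_index le_sup_left]
    _ = (I.toAddSubgroup.comap mulX).index * (I.toAddSubgroup.map ev).index := by
        rw [AddSubgroup.index_comap, AddSubgroup.index_map, hker, hev, AddSubgroup.index_top,
          mul_one]
    _ = (I.colon {X}).cardQuot * (I.map constantCoeff).cardQuot := by
        rw [← hcolon, ← hmap, Submodule.cardQuot, Submodule.cardQuot]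

lemma relIndex_colon_X {I : Ideal R[X]} (hI : I.cardQuot ≠ 0) :
    I.toAddSubgroup.relIndex (I.colon {X}).toAddSubgroup = (I.map constantCoeff).cardQuot := by
  have hmul := cardQuot_eq_cardQuot_colon_X_mul I
  have htower : I.toAddSubgroup.relIndex (I.colon {X}).toAddSubgroup * (I.colon {X}).cardQuot =
      I.cardQuot := AddSubgroup.relIndex_mul_index (Ideal.le_colon (S := {X}))
  rw [hmul, mul_comm] at htower
  exact Nat.eq_of_mul_eq_mul_left (Nat.pos_of_ne_zero (left_ne_zero_of_mul (hmul ▸ hI))) htower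

/-- The ideal `(f) + X J`. For `f ∈ J` whose constant coefficient `a` is not a zero divisor, it is
the unique ideal `I` containing `f` with `(I : X) = J` and constant coefficient ideal `(a)`. -/
noncomputable def extendBy (J : Ideal R[X]) (f : R[X]) : Ideal R[X] :=
  Ideal.span {f} ⊔ Ideal.span {X} * J

variable {I J : Ideal R[X]} {f g : R[X]}

lemma mem_extendBy : g ∈ extendBy J f ↔ ∃ p, ∃ h ∈ J, p * f + X * h = g := by
  simp [extendBy, Ideal.mem_span_singleton_sup, Ideal.mem_span_singleton_mul]

lemma self_mem_extendBy (J : Ideal R[X]) (f : R[X]) : f ∈ extendBy J f :=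
  mem_extendBy.2 ⟨1, 0, J.zero_mem, by simp⟩

lemma map_constantCoeff_extendBy (J : Ideal R[X]) (f : R[X]) :
    (extendBy J f).map constantCoeff = Ideal.span {f.coeff 0} := by
  simp [extendBy, Ideal.map_sup, Ideal.map_mul, Ideal.map_span]

lemma colon_X_extendBy (hf : f ∈ J) (hf0 : f.coeff 0 ∈ nonZeroDivisors R) :
    (extendBy J f).colon {X} = J := by
  ext h
  rw [mem_colon_X, mem_extendBy]
  refine ⟨?_, fun hh ↦ ⟨0, h, hh, by simp⟩⟩
  rintro ⟨p, j, hj, hpj⟩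
  have hp0 : p.coeff 0 * f.coeff 0 = 0 := by simpa using congrArg (coeff · 0) hpj
  obtain ⟨q, rfl⟩ := X_dvd_iff.2 ((mul_right_mem_nonZeroDivisors_eq_zero_iff hf0).1 hp0)
  have hh : q * f + j = h := isRegular_X.left <| by simpa only [mul_add, ← mul_assoc] using hpj
  exact hh ▸ J.add_mem (J.mul_mem_left q hf) hj

lemma extendBy_colon_X (hf : f ∈ I) (hI : I.map constantCoeff = Ideal.span {f.coeff 0}) :
    extendBy (I.colon {X}) f = I := by
  ext g
  rw [mem_extendBy]
  constructor
  · rintro ⟨p, h, hh, rfl⟩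
    exact I.add_mem (I.mul_mem_left p hf) (mem_colon_X.1 hh)
  · intro hg
    have hg0 : g.coeff 0 ∈ I.map constantCoeff := mem_map_constantCoeff.2 ⟨g, hg, rfl⟩
    rw [hI, Ideal.mem_span_singleton'] at hg0
    obtain ⟨k, hk⟩ := hg0
    obtain ⟨h, hh⟩ : X ∣ g - C k * f := X_dvd_iff.2 (by simp [hk])
    refine ⟨C k, h, mem_colon_X.2 (hh ▸ I.sub_mem hg (I.mul_mem_left _ hf)), ?_⟩
    rw [← hh, add_sub_cancel]

lemma extendBy_add_X_mul_inj (hf : f ∈ J) (hf0 : f.coeff 0 ∈ nonZeroDivisors R) {h h' : R[X]}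
    (hh : h ∈ J.colon {X}) (hh' : h' ∈ J.colon {X}) :
    extendBy J (f + X * h) = extendBy J (f + X * h') ↔ h' - h ∈ J := by
  have hcolon {k : R[X]} (hk : k ∈ J.colon {X}) : (extendBy J (f + X * k)).colon {X} = J :=
    colon_X_extendBy (J.add_mem hf (mem_colon_X.1 hk)) (by simpa using hf0)
  have hdiff : X * (h' - h) = f + X * h' - (f + X * h) := by ring
  constructor
  · intro heq
    rw [← hcolon hh, mem_colon_X, hdiff]
    exact Ideal.sub_mem _ (heq ▸ self_mem_extendBy J _) (self_mem_extendBy J _)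
  · intro hJ
    have hmem : f + X * h ∈ extendBy J (f + X * h') :=
      mem_extendBy.2 ⟨1, -(h' - h), J.neg_mem hJ, by ring⟩
    conv_lhs => rw [← hcolon hh']
    exact extendBy_colon_X hmem (by simp [map_constantCoeff_extendBy])

theorem card_colon_X_eq_and_map_constantCoeff_eq (J : Ideal R[X]) {a : R}
    (ha : a ∈ nonZeroDivisors R) (haJ : a ∈ J.map constantCoeff) :
    Nat.card {I : Ideal R[X] // I.colon {X} = J ∧ I.map constantCoeff = Ideal.span {a}} =
      J.toAddSubgroup.relIndex (J.colon {X}).toAddSubgroup := by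
  obtain ⟨f, hf, rfl⟩ := mem_map_constantCoeff.1 haJ
  let F (h : (J.colon {X}).toAddSubgroup) :
      {I : Ideal R[X] // I.colon {X} = J ∧ I.map constantCoeff = Ideal.span {f.coeff 0}} :=
    ⟨extendBy J (f + X * h.1),
      colon_X_extendBy (J.add_mem hf (mem_colon_X.1 h.2)) (by simpa using ha),
      by simp [map_constantCoeff_extendBy]⟩
  have hF : Function.Surjective F := by
    rintro ⟨I, rfl, hI⟩
    obtain ⟨g, hg, hgf⟩ := mem_map_constantCoeff.1 (hI ▸ Ideal.mem_span_singleton_self _)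
    obtain ⟨h, hh⟩ : X ∣ g - f := X_dvd_iff.2 (by simp [hgf])
    have hg' : g = f + X * h := by rw [← hh, add_sub_cancel]
    have hhI : h ∈ (I.colon {X}).colon {X} :=
      mem_colon_X.2 (hh ▸ Ideal.sub_mem _ (Ideal.le_colon hg) hf)
    refine ⟨⟨h, hhI⟩, Subtype.ext ?_⟩
    change extendBy (I.colon {X}) (f + X * h) = I
    rw [← hg', extendBy_colon_X hg (hgf ▸ hI)]
  have hker (h h' : (J.colon {X}).toAddSubgroup) : F h = F h' ↔
      -h + h' ∈ J.toAddSubgroup.addSubgroupOf (J.colon {X}).toAddSubgroup := by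
    rw [Subtype.mk.injEq, extendBy_add_X_mul_inj hf ha h.2 h'.2, ← neg_add_eq_sub]
    rfl
  exact (Nat.card_congr ((Quotient.congrRight fun h h' ↦
    QuotientAddGroup.leftRel_apply.trans (hker h h').symm).trans
      (Setoid.quotientKerEquivOfSurjective F hF))).symm

end ConstantCoeff

lemma idealCount_quotient {R : Type} [CommRing R] (K : Ideal R) (k : ℕ) :
    idealCount (R ⧸ K) k = Nat.card {I : Ideal R // K ≤ I ∧ I.cardQuot = k} := by
  let π := Ideal.Quotient.mk K
  have hπ : Function.Surjective π := Ideal.Quotient.mk_surjective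
  have hcard (I : Ideal (R ⧸ K)) : (I.comap π).cardQuot = Nat.card ((R ⧸ K) ⧸ I) :=
    AddSubgroup.index_comap_of_surjective I.toAddSubgroup (f := π.toAddMonoidHom) hπ
  have himage : Ideal.comap π '' {I | Nat.card ((R ⧸ K) ⧸ I) = k} =
      {I : Ideal R | K ≤ I ∧ I.cardQuot = k} := by
    ext I
    constructor
    · rintro ⟨I, hI, rfl⟩
      exact ⟨K.mk_ker.symm.trans_le (Ideal.ker_le_comap π), (hcard I).trans hI⟩
    · rintro ⟨hKI, hI⟩
      have hcomap : (I.map π).comap π = I := Ideal.comap_map_mk hKI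
      exact ⟨I.map π, by rw [Set.mem_ofPred_eq, ← hcard, hcomap, hI], hcomap⟩
  rw [idealCount, ← Set.ncard_image_of_injective _ (Ideal.comap_injective_of_surjective π hπ),
    himage]
  exact (Nat.card_coe_set_eq _).symm

section TruncatedIdeals

/-- The nonnegative generator of the ideal of constant coefficients of an ideal of `ℤ[X]`. -/
noncomputable def constNorm (I : Ideal ℤ[X]) : ℕ :=
  Ideal.absNorm (I.map constantCoeff)

lemma span_constNorm (I : Ideal ℤ[X]) : Ideal.span {(constNorm I : ℤ)} = I.map constantCoeff :=
  Int.ideal_span_absNorm_eq_self _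

lemma map_constantCoeff_eq_span_natCast_iff {I : Ideal ℤ[X]} {a : ℕ} :
    I.map constantCoeff = Ideal.span {(a : ℤ)} ↔ constNorm I = a := by
  refine ⟨fun h ↦ by simp [constNorm, h], ?_⟩
  rintro rfl
  exact (span_constNorm I).symm

lemma constNorm_colon_X_dvd (I : Ideal ℤ[X]) : constNorm (I.colon {X}) ∣ constNorm I :=
  Ideal.absNorm_dvd_absNorm_of_le (Ideal.map_mono Ideal.le_colon)

lemma cardQuot_eq_mul_constNorm (I : Ideal ℤ[X]) :
    I.cardQuot = (I.colon {X}).cardQuot * constNorm I :=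
  cardQuot_eq_cardQuot_colon_X_mul I

lemma card_colon_X_eq_and_constNorm_eq {J : Ideal ℤ[X]} (hJ : J.cardQuot ≠ 0) {a : ℕ}
    (ha : a ≠ 0) (hdvd : constNorm J ∣ a) :
    Nat.card {I : Ideal ℤ[X] // I.colon {X} = J ∧ constNorm I = a} = constNorm J := by
  have haJ : (a : ℤ) ∈ J.map constantCoeff := by
    rw [← span_constNorm, Ideal.mem_span_singleton]
    exact_mod_cast hdvd
  simp_rw [← map_constantCoeff_eq_span_natCast_iff]
  rw [card_colon_X_eq_and_map_constantCoeff_eq J (by simpa using ha) haJ, relIndex_colon_X hJ]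
  rfl

/-- The ideals of `ℤ[X]` of finite index containing `X ^ n`, which correspond to the ideals of
finite index of `ℤ[X] / (X ^ n)`. Infinite index is encoded by `Submodule.cardQuot I = 0`. -/
def truncIdeals (n : ℕ) : Set (Ideal ℤ[X]) :=
  {I | X ^ n ∈ I ∧ I.cardQuot ≠ 0}

variable {n : ℕ}

lemma constNorm_ne_zero {I : Ideal ℤ[X]} (hI : I.cardQuot ≠ 0) : constNorm I ≠ 0 :=
  right_ne_zero_of_mul (cardQuot_eq_mul_constNorm I ▸ hI)

lemma truncIdeals_zero : truncIdeals 0 = {⊤} := by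
  ext I
  rw [truncIdeals, Set.mem_ofPred_eq, pow_zero, ← Ideal.eq_top_iff_one, Set.mem_singleton_iff]
  exact and_iff_left_of_imp fun h ↦ by simp [h]

lemma mem_truncIdeals_succ {I : Ideal ℤ[X]} :
    I ∈ truncIdeals (n + 1) ↔ I.colon {X} ∈ truncIdeals n ∧ constNorm I ≠ 0 := by
  simp only [truncIdeals, Set.mem_ofPred_eq, mem_colon_X, ← pow_succ', and_assoc,
    cardQuot_eq_mul_constNorm I, mul_ne_zero_iff]

/-- The pair `(J, m)` with `J = (I : X)` and `constNorm I = constNorm J * m`. -/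
noncomputable def descend (I : truncIdeals (n + 1)) : truncIdeals n × ℕ+ :=
  (⟨I.1.colon {X}, (mem_truncIdeals_succ.1 I.2).1⟩,
    ⟨constNorm I.1 / constNorm (I.1.colon {X}), Nat.pos_of_ne_zero <|
      (Nat.div_ne_zero_iff_of_dvd (constNorm_colon_X_dvd I.1)).2
        ⟨(mem_truncIdeals_succ.1 I.2).2, constNorm_ne_zero (mem_truncIdeals_succ.1 I.2).1.2⟩⟩)

lemma constNorm_eq_of_descend (I : truncIdeals (n + 1)) :
    constNorm I.1 = constNorm (descend I).1.1 * (descend I).2 :=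
  (Nat.mul_div_cancel' (constNorm_colon_X_dvd I.1)).symm

lemma cardQuot_eq_of_descend (I : truncIdeals (n + 1)) :
    I.1.cardQuot = (descend I).1.1.cardQuot * (constNorm (descend I).1.1 * (descend I).2) := by
  rw [← constNorm_eq_of_descend]
  exact cardQuot_eq_mul_constNorm I.1

lemma descend_eq_iff {I : truncIdeals (n + 1)} {J : truncIdeals n} {m : ℕ+} :
    descend I = (J, m) ↔ I.1.colon {X} = J.1 ∧ constNorm I.1 = constNorm J.1 * m := by
  refine ⟨fun h ↦ ⟨congrArg (·.1.1) h, by rw [constNorm_eq_of_descend, h]⟩, fun ⟨hJ, hm⟩ ↦ ?_⟩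
  have hfst : (descend I).1 = J := Subtype.ext hJ
  rw [constNorm_eq_of_descend, hfst] at hm
  exact Prod.ext hfst (PNat.eq (Nat.eq_of_mul_eq_mul_left
    (Nat.pos_of_ne_zero (constNorm_ne_zero J.2.2)) hm))

lemma card_descend_fiber (J : truncIdeals n) (m : ℕ+) :
    Nat.card {I : truncIdeals (n + 1) // descend I = (J, m)} = constNorm J.1 := by
  have ha : constNorm J.1 * (m : ℕ) ≠ 0 := mul_ne_zero (constNorm_ne_zero J.2.2) m.ne_zero
  rw [← card_colon_X_eq_and_constNorm_eq J.2.2 ha (dvd_mul_right _ _)]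
  simp_rw [descend_eq_iff]
  have hmem {I : Ideal ℤ[X]} (hI : I.colon {X} = J.1 ∧ constNorm I = constNorm J.1 * m) :
      I ∈ truncIdeals (n + 1) :=
    mem_truncIdeals_succ.2 ⟨hI.1 ▸ J.2, hI.2 ▸ ha⟩
  exact Nat.card_congr (Equiv.subtypeSubtypeEquivSubtype hmem)

lemma card_truncIdeals_cardQuot_eq (n : ℕ) (k : ℕ+) :
    Nat.card {I : truncIdeals n // I.1.cardQuot = k} =
      idealCount (ℤ[X] ⧸ Ideal.span {(X : ℤ[X]) ^ n}) k := by
  simp_rw [idealCount_quotient, Ideal.span_singleton_le_iff_mem]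
  refine Nat.card_congr ((Equiv.subtypeSubtypeEquivSubtypeInter
    (· ∈ truncIdeals n) (·.cardQuot = k)).trans
    (Equiv.subtypeEquivRight fun I ↦ ?_))
  simp only [truncIdeals, Set.mem_ofPred_eq, and_assoc]
  exact and_congr_right fun _ ↦ and_iff_right_of_imp fun h ↦ h ▸ k.ne_zero

end TruncatedIdeals

section Zeta

lemma hasSum_pnat_cpow_neg {s : ℂ} (hs : 1 < s.re) :
    HasSum (fun m : ℕ+ ↦ (m : ℂ) ^ (-s)) (riemannZeta s) := by
  have hsum : HasSum (fun m : ℕ ↦ (m : ℂ) ^ (-s)) (riemannZeta s) := by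
    simpa only [zeta_eq_tsum_one_div_nat_cpow hs, one_div, ← Complex.cpow_neg] using
      (Complex.summable_one_div_nat_cpow.2 hs).hasSum
  have hs0 : -s ≠ 0 := neg_ne_zero.2 (Complex.ne_zero_of_one_lt_re hs)
  rw [hasSum_pnat_iff (f := fun m : ℕ ↦ (m : ℂ) ^ (-s))]
  simpa [Complex.zero_cpow hs0] using hsum

/-- The term `[ℤ[X] : I]⁻ˢ c(I)⁻ʷ`. The variable `w` is needed for the induction on `n`. -/
noncomputable def zetaTerm (s w : ℂ) (I : Ideal ℤ[X]) : ℂ :=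
  (I.cardQuot : ℂ) ^ (-s) * (constNorm I : ℂ) ^ (-w)

lemma natCast_mul_cpow_mul_cpow (N m : ℕ) {c : ℕ} (hc : c ≠ 0) (hm : m ≠ 0) (s w : ℂ) :
    (c : ℂ) * (((N * (c * m) : ℕ) : ℂ) ^ (-s) * ((c * m : ℕ) : ℂ) ^ (-w)) =
      (N : ℂ) ^ (-s) * (c : ℂ) ^ (-(s + w - 1)) * (m : ℂ) ^ (-(s + w)) := by
  have hc : (c : ℂ) ≠ 0 := Nat.cast_ne_zero.2 hc
  have hm : (m : ℂ) ≠ 0 := Nat.cast_ne_zero.2 hm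
  have hmul (a b : ℕ) (z : ℂ) : ((a * b : ℕ) : ℂ) ^ z = (a : ℂ) ^ z * (b : ℂ) ^ z := by
    rw [Nat.cast_mul, Complex.natCast_mul_natCast_cpow]
  rw [hmul, hmul, hmul, show -(s + w - 1) = -s + -w + 1 by ring,
    show -(s + w) = -s + -w by ring, Complex.cpow_add _ _ hc, Complex.cpow_add _ _ hc,
    Complex.cpow_add _ _ hm, Complex.cpow_one]
  ring

lemma hasSum_zetaTerm_succ {n : ℕ} {s w T : ℂ} (hsw : 1 < (s + w).re)
    (h : HasSum (fun J : truncIdeals n ↦ zetaTerm s (s + w - 1) J.1) T) :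
    HasSum (fun I : truncIdeals (n + 1) ↦ zetaTerm s w I.1) (T * riemannZeta (s + w)) := by
  let f (p : truncIdeals n × ℕ+) : ℂ :=
    ((p.1.1.cardQuot * (constNorm p.1.1 * p.2) : ℕ) : ℂ) ^ (-s) *
      ((constNorm p.1.1 * p.2 : ℕ) : ℂ) ^ (-w)
  have hf (I : truncIdeals (n + 1)) : f (descend I) = zetaTerm s w I.1 := by
    rw [zetaTerm, cardQuot_eq_of_descend, constNorm_eq_of_descend]
  have hfiber (p : truncIdeals n × ℕ+) : Nat.card {I // descend I = p} • f p =
      zetaTerm s (s + w - 1) p.1.1 * (p.2 : ℂ) ^ (-(s + w)) := by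
    rw [card_descend_fiber, nsmul_eq_mul]
    exact natCast_mul_cpow_mul_cpow _ _ (constNorm_ne_zero p.1.2.2) p.2.ne_zero s w
  have hfinite (p : truncIdeals n × ℕ+) : Finite {I // descend I = p} :=
    Nat.finite_of_card_ne_zero (card_descend_fiber p.1 p.2 ▸ constNorm_ne_zero p.1.2.2)
  have hprod := hasSum_fst_mul_snd h (hasSum_pnat_cpow_neg hsw)
  have hdescend := hasSum_comp_of_hasSum_card_fiber_smul hfinite (hprod.congr_fun hfiber)
  exact hdescend.congr_fun fun I ↦ (hf I).symm

theorem hasSum_zetaTerm (n : ℕ) {s w : ℂ} (hs : 1 < s.re) (hw : 0 ≤ w.re) :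
    HasSum (fun I : truncIdeals n ↦ zetaTerm s w I.1)
      (∏ i ∈ Finset.range n, riemannZeta ((i + 1) * (s - 1) + 1 + w)) := by
  induction n generalizing w with
  | zero =>
    rw [truncIdeals_zero]
    simpa [zetaTerm, constNorm, Ideal.map_top] using
      hasSum_unique fun I : ({⊤} : Set (Ideal ℤ[X])) ↦ zetaTerm s w I.1
  | succ n ih =>
    have hsw : 1 < (s + w).re := by rw [Complex.add_re]; linarith
    have hw' : 0 ≤ (s + w - 1).re := by simpa using hsw.le
    convert hasSum_zetaTerm_succ hsw (ih hw') using 1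
    rw [Finset.prod_range_succ']
    congr 1
    · refine Finset.prod_congr rfl fun i _ ↦ congrArg riemannZeta ?_
      push_cast
      ring
    · congr 1
      push_cast
      ring

theorem hasSum_idealCount (n : ℕ) {s : ℂ} (hs : 1 < s.re) :
    HasSum (fun k : ℕ+ ↦
        (idealCount (ℤ[X] ⧸ Ideal.span {(X : ℤ[X]) ^ n}) k : ℂ) / (k : ℂ) ^ s)
      (∏ i ∈ Finset.range n, riemannZeta ((i + 1) * (s - 1) + 1)) := by
  let index (I : truncIdeals n) : ℕ+ := ⟨I.1.cardQuot, Nat.pos_of_ne_zero I.2.2⟩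
  have hsum : HasSum (fun I : truncIdeals n ↦ (index I : ℂ) ^ (-s))
      (∏ i ∈ Finset.range n, riemannZeta ((i + 1) * (s - 1) + 1)) := by
    simpa [index, zetaTerm] using hasSum_zetaTerm n hs (w := 0) le_rfl
  refine (hasSum_card_fiber_smul (f := fun k : ℕ+ ↦ (k : ℂ) ^ (-s)) hsum).congr_fun fun k ↦ ?_
  simp_rw [← card_truncIdeals_cardQuot_eq, ← PNat.coe_inj]
  rw [nsmul_eq_mul, Complex.cpow_neg, div_eq_mul_inv]
  rfl

lemma prod_riemannZeta_eq_div (n : ℕ) {s : ℂ} (hs : s ≠ 1) :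
    ∏ i ∈ Finset.range n, riemannZeta ((i + 1) * (s - 1) + 1) =
      (∏ i ∈ Finset.range n, riemannZeta₁ ((i + 1) * (s - 1) + 1) / (i + 1)) / (s - 1) ^ n := by
  have hpow : (s - 1) ^ n = ∏ _i ∈ Finset.range n, (s - 1) := by simp
  rw [hpow, ← Finset.prod_div_distrib]
  refine Finset.prod_congr rfl fun i _ ↦ ?_
  have hi : (i + 1 : ℂ) ≠ 0 := Nat.cast_add_one_ne_zero i
  have hs' : s - 1 ≠ 0 := sub_ne_zero.2 hs
  rw [riemannZeta_eq_inv_sub_mul (by simpa using ⟨hi, hs'⟩), add_sub_cancel_right]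
  field_simp

end Zeta

end IdealZeta

/-- The ideal zeta function of `ℤ[X]/(X^n)` converges for `Re s > 1` and has a pole of
order `n` at `s = 1`. -/
theorem ideal_zeta_int_poly_quot_pow_pole_order (n : ℕ) (hn : 0 < n) :
    ∃ δ > (0 : ℝ), ∃ g : ℂ → ℂ,
      DifferentiableOn ℂ g {s : ℂ | 1 - δ < s.re} ∧ g 1 ≠ 0 ∧
      ∀ s : ℂ, 1 < s.re →
        HasSum
          (fun k : ℕ+ =>
            (idealCount (Polynomial ℤ ⧸ Ideal.span {(Polynomial.X : Polynomial ℤ) ^ n}) k : ℂ) /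
              (k : ℂ) ^ s)
          (g s / (s - 1) ^ n) := by
  refine ⟨1, one_pos,
    fun s ↦ ∏ i ∈ Finset.range n, riemannZeta₁ ((i + 1) * (s - 1) + 1) / (i + 1), ?_, ?_, ?_⟩
  · exact Differentiable.differentiableOn (by fun_prop)
  · simp [Finset.prod_ne_zero_iff, Nat.cast_add_one_ne_zero]
  · intro s hs
    have hs1 : s ≠ 1 := by
      rintro rfl
      exact lt_irrefl _ hs
    exact IdealZeta.prod_riemannZeta_eq_div n hs1 ▸ IdealZeta.hasSum_idealCount n hs
end
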